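/- arXiv:2007.02621 — 11 statements merged into one kernel-verified Lean document; each statement's English description precedes it below -/
import Mathlib

section
/- Let G be a finite undirected loopless multigraph with real edge weights and let R be a positive natural number, such that between any pair of vertices u, v there are either exactly R parallel edges, all of the same weight w({u,v}), or no edges. Let G' be the simple graph obtained from G by keeping exactly one edge between each connected pair, with weight w. Then the maximum total weight of a bipartite subgraph J of G in which every vertex is incident to at most R edges of J equals R times the maximum weight of a matching in G'; moreover this maximum is attained by the subgraph consisting of all R parallel copies of every edge of a maximum-weight matching of G'. -/
namespace S1

/-- Weight of a multigraph subgraph given by edge multiplicities `m` (symmetric),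
with edge weights `w`; each unordered pair is counted twice in the double sum,
hence the division by 2. -/
noncomputable def wt {V : Type} [Fintype V] (w : V → V → ℝ) (m : V → V → ℕ) : ℝ :=
  (∑ u, ∑ v, (m u v : ℝ) * w u v) / 2

/-- `m` is (the indicator of) a matching in the simple graph with adjacency `Adj`. -/
def isMatching {V : Type} [Fintype V] (Adj : V → V → Prop) (m : V → V → ℕ) : Prop :=
  (∀ u v, m u v = m v u) ∧ (∀ u v, ¬ Adj u v → m u v = 0) ∧
  (∀ u v, m u v ≤ 1) ∧ (∀ v, ∑ u, m v u ≤ 1)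

/-- `m` gives a bipartite subgraph of the multigraph `G` (which has `R` parallel
copies of every edge of the simple graph `Adj`) in which every vertex is incident
to at most `R` edges. -/
def isBipSub {V : Type} [Fintype V] (Adj : V → V → Prop) (R : ℕ) (m : V → V → ℕ) : Prop :=
  (∀ u v, m u v = m v u) ∧ (∀ u v, ¬ Adj u v → m u v = 0) ∧
  (∀ u v, m u v ≤ R) ∧ (∀ v, ∑ u, m v u ≤ R) ∧
  (∃ p : V → Bool, ∀ u v, 0 < m u v → p u ≠ p v)

end S1

namespace S1

open Classical in
/-- oriented matching piece -/
noncomputable def pc {V : Type} (Adj : V → V → Prop) (p : V → Bool) (σ : Equiv.Perm V)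
    (b : Bool) (u v : V) : ℕ :=
  if Adj u v ∧ p u ≠ p v ∧ p u = b ∧ σ u = v then 1 else 0

open Classical in
/-- restricted weight -/
noncomputable def rw' {V : Type} (Adj : V → V → Prop) (p : V → Bool) (w : V → V → ℝ)
    (u v : V) : ℝ :=
  if Adj u v ∧ p u ≠ p v then w u v else 0

theorem pc_matching {V : Type} [Fintype V] (Adj : V → V → Prop)
    (hsym : ∀ u v, Adj u v → Adj v u) (p : V → Bool) (σ : Equiv.Perm V) (b : Bool) :
    isMatching Adj (fun u v => pc Adj p σ b u v + pc Adj p σ b v u) := by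
  classical
  have hdeg : ∀ v, ∑ u, (pc Adj p σ b v u + pc Adj p σ b u v) ≤ 1 := by
    intro v
    by_cases hv : p v = b
    · calc ∑ u, (pc Adj p σ b v u + pc Adj p σ b u v) ≤ ∑ u, (if σ v = u then 1 else 0) := by
            apply Finset.sum_le_sum
            intro u _
            unfold pc
            grind
        _ ≤ 1 := by simp
    · calc ∑ u, (pc Adj p σ b v u + pc Adj p σ b u v)
            ≤ ∑ u, (if u = σ.symm v then 1 else 0) := by
            apply Finset.sum_le_sum
            intro u _
            have : u = σ.symm v ↔ σ u = v := Equiv.eq_symm_apply σ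
            unfold pc
            simp only [this]
            grind
        _ ≤ 1 := by simp
  refine ⟨fun u v => add_comm _ _, ?_, ?_, hdeg⟩
  · intro u v h
    have : ¬ Adj v u := fun h' => h (hsym _ _ h')
    simp [pc, h, this]
  · intro u v
    exact (Finset.single_le_sum (f := fun u' => pc Adj p σ b u u' + pc Adj p σ b u' u)
      (fun _ _ => Nat.zero_le _) (Finset.mem_univ v)).trans (hdeg u)

theorem pc_wt {V : Type} [Fintype V] (Adj : V → V → Prop)
    (w : V → V → ℝ) (hwsym : ∀ u v, w u v = w v u) (p : V → Bool) (σ : Equiv.Perm V) (b : Bool) :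
    wt w (fun u v => pc Adj p σ b u v + pc Adj p σ b v u) =
      ∑ u, if p u = b then rw' Adj p w u (σ u) else 0 := by
  classical
  have h1 : ∑ u, ∑ v, (pc Adj p σ b v u : ℝ) * w u v =
      ∑ u, ∑ v, (pc Adj p σ b u v : ℝ) * w u v := by
    rw [Finset.sum_comm]
    refine Finset.sum_congr rfl fun u _ => Finset.sum_congr rfl fun v _ => ?_
    rw [hwsym]
  have h2 : ∀ u, ∑ v, (pc Adj p σ b u v : ℝ) * w u v =
      if p u = b then rw' Adj p w u (σ u) else 0 := by
    intro u
    rw [Finset.sum_eq_single (σ u)]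
    · unfold pc rw'
      by_cases h : p u = b <;> by_cases h' : Adj u (σ u) ∧ p u ≠ p (σ u)
      · rw [if_pos ⟨h'.1, h'.2, h, rfl⟩, if_pos h, if_pos h']; simp
      · rw [if_neg (fun k => h' ⟨k.1, k.2.1⟩), if_pos h, if_neg h']; simp
      · rw [if_neg (fun k => h k.2.2.1), if_neg h]; simp
      · rw [if_neg (fun k => h k.2.2.1), if_neg h]; simp
    · intro v _ hv
      unfold pc
      rw [if_neg (fun k => hv k.2.2.2.symm)]; simp
    · simp
  unfold wt
  push_cast
  simp only [add_mul, Finset.sum_add_distrib]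
  rw [h1]
  simp only [h2]
  ring

theorem perm_bound {V : Type} [Fintype V] (Adj : V → V → Prop)
    (hsym : ∀ u v, Adj u v → Adj v u)
    (w : V → V → ℝ) (hwsym : ∀ u v, w u v = w v u) (p : V → Bool) (σ : Equiv.Perm V) (c : ℝ)
    (hc : ∀ M', isMatching Adj M' → wt w M' ≤ c) :
    ∑ u, rw' Adj p w u (σ u) ≤ 2 * c := by
  have ht := hc _ (pc_matching Adj hsym p σ true)
  have hf := hc _ (pc_matching Adj hsym p σ false)
  rw [pc_wt Adj w hwsym] at ht hf
  have : ∑ u, rw' Adj p w u (σ u) = (∑ u, if p u = true then rw' Adj p w u (σ u) else 0) +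
      ∑ u, if p u = false then rw' Adj p w u (σ u) else 0 := by
    rw [← Finset.sum_add_distrib]
    refine Finset.sum_congr rfl fun u _ => ?_
    cases p u <;> simp
  linarith

theorem ds_bound {V : Type} [Fintype V] [DecidableEq V] (f : V → V → ℝ) (c : ℝ)
    (hσ : ∀ σ : Equiv.Perm V, ∑ u, f u (σ u) ≤ c) (D : Matrix V V ℝ)
    (hD : D ∈ doublyStochastic ℝ V) : ∑ u, ∑ v, D u v * f u v ≤ c := by
  have h : (doublyStochastic ℝ V : Set (Matrix V V ℝ)) ⊆
      {D | ∑ u, ∑ v, D u v * f u v ≤ c} := by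
    rw [doublyStochastic_eq_convexHull_permMatrix]
    apply convexHull_min
    · rintro _ ⟨σ, rfl⟩
      refine le_trans (le_of_eq ?_) (hσ σ)
      refine Finset.sum_congr rfl fun u _ => ?_
      simp [Equiv.Perm.permMatrix, PEquiv.toMatrix_apply]
    · apply convex_halfSpace_le (f := fun D : Matrix V V ℝ => ∑ u, ∑ v, D u v * f u v)
      constructor
      · intro x y
        simp [add_mul, Finset.sum_add_distrib]
      · intro a x
        simp [Finset.mul_sum, mul_assoc]
  exact h hD

theorem bip_bound {V : Type} [Fintype V] [DecidableEq V] (R : ℕ) (hR : 1 ≤ R)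
    (Adj : V → V → Prop)
    (hsym : ∀ u v, Adj u v → Adj v u) (hirr : ∀ v, ¬ Adj v v)
    (w : V → V → ℝ) (hwsym : ∀ u v, w u v = w v u) (c : ℝ)
    (hc : ∀ M', isMatching Adj M' → wt w M' ≤ c) (J : V → V → ℕ) (hJ : isBipSub Adj R J) :
    wt w J ≤ R * c := by
  obtain ⟨hs, ha, -, hd, p, hp⟩ := hJ
  have hR0 : (0 : ℝ) < R := by exact_mod_cast hR
  have hd' : ∀ v, (∑ u, (J v u : ℝ)) ≤ R := fun v => by exact_mod_cast hd v
  let D : Matrix V V ℝ := fun u v =>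
    (J u v : ℝ) / R + if u = v then 1 - (∑ x, (J u x : ℝ)) / R else 0
  have hDs : ∀ u v, D u v = D v u := by
    intro u v
    by_cases h : u = v
    · rw [h]
    · simp [D, h, Ne.symm h, hs u v]
  have hrow : ∀ u, ∑ v, D u v = 1 := by
    intro u
    simp [D, Finset.sum_add_distrib, Finset.sum_div]
  have hD : D ∈ doublyStochastic ℝ V := by
    rw [mem_doublyStochastic_iff_sum]
    refine ⟨fun u v => ?_, hrow, fun v => ?_⟩
    · have h1 : (∑ x, (J u x : ℝ)) / R ≤ 1 := (div_le_one hR0).2 (hd' u)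
      have h2 : (0 : ℝ) ≤ (J u v : ℝ) / R := by positivity
      simp only [D]
      split_ifs <;> linarith
    · rw [← hrow v]
      exact Finset.sum_congr rfl fun u _ => hDs u v
  have key := ds_bound (rw' Adj p w) (2 * c)
    (fun σ => perm_bound Adj hsym w hwsym p σ c hc) D hD
  have he : ∀ u v, D u v * rw' Adj p w u v = ((J u v : ℝ) * w u v) / R := by
    intro u v
    by_cases h : u = v
    · subst h
      simp [rw', ha u u (hirr u)]
    · by_cases hz : J u v = 0
      · simp [D, h, hz]
      · have h1 : Adj u v := by
          by_contra h'
          exact hz (ha u v h')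
        have h2 := hp u v (Nat.pos_of_ne_zero hz)
        simp [D, h, rw', h1, h2]
        ring
  simp only [he, ← Finset.sum_div] at key
  rw [div_le_iff₀ hR0] at key
  unfold wt
  linarith

theorem matching_bip {V : Type} [Fintype V] [DecidableEq V] (R : ℕ)
    (Adj : V → V → Prop) (hirr : ∀ v, ¬ Adj v v) (M : V → V → ℕ) (hM : isMatching Adj M) :
    isBipSub Adj R (fun u v => R * M u v) := by
  classical
  obtain ⟨hs, ha, h1, hd⟩ := hM
  refine ⟨fun u v => by simp [hs u v], fun u v h => by simp [ha u v h],
    fun u v => by simpa using Nat.mul_le_mul_left R (h1 u v), fun v => ?_, ?_⟩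
  · rw [← Finset.mul_sum]
    simpa using Nat.mul_le_mul_left R (hd v)
  · have huniq : ∀ u a b, 0 < M u a → 0 < M u b → a = b := by
      intro u a b hA hB
      by_contra hne
      have h2 : ∑ x ∈ ({a, b} : Finset V), M u x ≤ ∑ x, M u x :=
        Finset.sum_le_sum_of_subset (Finset.subset_univ _)
      rw [Finset.sum_pair hne] at h2
      have := hd u
      omega
    let e := Fintype.equivFin V
    refine ⟨fun u => decide (∃ v, 0 < M u v ∧ e u < e v), fun u v h => ?_⟩
    have hpos : 0 < M u v := Nat.pos_of_mul_pos_left h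
    have hpos' : 0 < M v u := hs u v ▸ hpos
    have hne : u ≠ v := by
      rintro rfl
      rw [ha u u (hirr u)] at hpos
      exact absurd hpos (lt_irrefl _)
    have e1 : (∃ x, 0 < M u x ∧ e u < e x) ↔ e u < e v :=
      ⟨fun ⟨x, hx, hlt⟩ => huniq u x v hx hpos ▸ hlt, fun hlt => ⟨v, hpos, hlt⟩⟩
    have e2 : (∃ x, 0 < M v x ∧ e v < e x) ↔ e v < e u :=
      ⟨fun ⟨x, hx, hlt⟩ => huniq v x u hx hpos' ▸ hlt, fun hlt => ⟨u, hpos', hlt⟩⟩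
    have hne' : e u ≠ e v := fun k => hne (e.injective k)
    simp only [e1, e2]
    intro k
    rw [decide_eq_decide] at k
    rcases lt_or_gt_of_ne hne' with h' | h'
    · exact lt_asymm h' (k.1 h')
    · exact lt_asymm h' (k.2 h')

end S1

/-- For a multigraph `G` consisting of exactly `R` parallel edges of the
same positive weight between each adjacent pair of the simple graph `G' = (V, Adj, w)`,
the maximum weight of a bipartite subgraph of `G` with all degrees at most `R` equals
`R` times the maximum weight of a matching of `G'`, attained by taking all `R` parallel
copies of every edge of a maximum-weight matching of `G'`. -/
theorem max_bipartite_subgraph_eq_R_mul_max_matching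
    (V : Type) [Fintype V] [DecidableEq V]
    (R : ℕ) (hR : 1 ≤ R)
    (Adj : V → V → Prop) (hsym : ∀ u v, Adj u v → Adj v u) (hirr : ∀ v, ¬ Adj v v)
    (w : V → V → ℝ) (hwsym : ∀ u v, w u v = w v u) (hwpos : ∀ u v, Adj u v → 0 < w u v) :
    ∃ M : V → V → ℕ,
      S1.isMatching Adj M ∧
      (∀ M' : V → V → ℕ, S1.isMatching Adj M' → S1.wt w M' ≤ S1.wt w M) ∧
      S1.isBipSub Adj R (fun u v => R * M u v) ∧
      S1.wt w (fun u v => R * M u v) = (R : ℝ) * S1.wt w M ∧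
      (∀ J : V → V → ℕ, S1.isBipSub Adj R J → S1.wt w J ≤ (R : ℝ) * S1.wt w M) := by
  have hfin : {m : V → V → ℕ | S1.isMatching Adj m}.Finite :=
    (Set.finite_Icc (0 : V → V → ℕ) (fun _ _ => 1)).subset
      fun m hm => ⟨fun _ _ => Nat.zero_le _, fun u v => hm.2.2.1 u v⟩
  obtain ⟨M, hM, hmax⟩ := Set.exists_max_image _ (S1.wt w) hfin
    ⟨fun _ _ => 0, by simp [S1.isMatching]⟩
  refine ⟨M, hM, hmax, S1.matching_bip R Adj hirr M hM, ?_,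
    S1.bip_bound R hR Adj hsym hirr w hwsym _ hmax⟩
  simp only [S1.wt, Nat.cast_mul, mul_assoc, ← Finset.mul_sum]
  ring
end

section
/- Let D be a finite loopless directed multigraph with positive arc weights and let R be a positive natural number, such that for every ordered pair (u,v) of vertices, D contains either exactly R parallel arcs from u to v, all of the same weight w(u,v) > 0, or no arcs from u to v, and such that D never contains arcs in both directions between the same pair of vertices. Set r(v) = R for every vertex. Then the maximum total weight of a half-duplex subgraph of D equals R times the maximum weight of a matching in the underlying simple undirected graph of D (which has one edge {u,v} of weight w(u,v) for every pair joined by arcs in D). -/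
namespace S2

/-- Weight of a directed subgraph given by arc multiplicities `m`, with arc weights `w`. -/
noncomputable def dwt {V : Type} [Fintype V] (w : V → V → ℝ) (m : V → V → ℕ) : ℝ :=
  ∑ u, ∑ v, (m u v : ℝ) * w u v

/-- `m` is a half-duplex subgraph of the directed multigraph with `R` parallel arcs
between each `A`-related ordered pair and RF-chain number `R` at every vertex:
supported on arcs, at most `R` parallel copies of each arc, every vertex incident
(as head or tail) to at most `R` arcs, and no vertex is both head of an arc and
tail of an arc. -/
def isHD {V : Type} [Fintype V] (A : V → V → Prop) (R : ℕ) (m : V → V → ℕ) : Prop :=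
  (∀ u v, ¬ A u v → m u v = 0) ∧ (∀ u v, m u v ≤ R) ∧
  (∀ v, ((∑ u, m u v) + ∑ u, m v u) ≤ R) ∧
  (∀ v, 0 < ∑ u, m u v → (∑ u, m v u) = 0)

/-- `m` is a matching of the underlying simple undirected graph (edges oriented along
`A`, since arcs never occur in both directions): a set of arcs no two of which share a
vertex. -/
def isUMatch {V : Type} [Fintype V] (A : V → V → Prop) (m : V → V → ℕ) : Prop :=
  (∀ u v, ¬ A u v → m u v = 0) ∧ (∀ u v, m u v ≤ 1) ∧
  (∀ v, ((∑ u, m u v) + ∑ u, m v u) ≤ 1)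

end S2

/-- Sub-stochastic Birkhoff, via dilation to a doubly stochastic matrix on `V ⊕ V`. -/
lemma exists_perm_decomp {V : Type} [Fintype V] [DecidableEq V] (P : V → V → ℝ)
    (h0 : ∀ u v, 0 ≤ P u v) (hr : ∀ u, ∑ v, P u v ≤ 1) (hc : ∀ v, ∑ u, P u v ≤ 1) :
    ∃ c : Equiv.Perm (V ⊕ V) → ℝ, (∀ σ, 0 ≤ c σ) ∧ ∑ σ, c σ = 1 ∧
      ∀ u v, P u v = ∑ σ, c σ * (if σ (Sum.inl u) = Sum.inl v then 1 else 0) := by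
  let Q : Matrix (V ⊕ V) (V ⊕ V) ℝ := Matrix.fromBlocks (Matrix.of P)
    (Matrix.diagonal fun u => 1 - ∑ v, P u v) (Matrix.diagonal fun v => 1 - ∑ u, P u v)
    (Matrix.of P).transpose
  have hQ : Q ∈ doublyStochastic ℝ (V ⊕ V) := by
    rw [mem_doublyStochastic_iff_sum]
    refine ⟨?_, ?_, ?_⟩
    · rintro (i | i) (j | j)
      · exact h0 i j
      · simp only [Q, Matrix.fromBlocks_apply₁₂, Matrix.diagonal_apply]
        split_ifs
        · linarith [hr i]
        · exact le_rfl
      · simp only [Q, Matrix.fromBlocks_apply₂₁, Matrix.diagonal_apply]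
        split_ifs
        · linarith [hc i]
        · exact le_rfl
      · exact h0 j i
    · rintro (i | i) <;> simp [Q, Matrix.diagonal_apply]
    · rintro (i | i) <;> simp [Q, Matrix.diagonal_apply]
  obtain ⟨c, hc0, hc1, hcQ⟩ := exists_eq_sum_perm_of_mem_doublyStochastic hQ
  refine ⟨c, hc0, hc1, fun u v => ?_⟩
  have h : Q (Sum.inl u) (Sum.inl v) = P u v := rfl
  rw [← h, ← hcQ, Matrix.sum_apply]
  refine Finset.sum_congr rfl fun σ _ => ?_
  simp [Equiv.Perm.permMatrix, PEquiv.toMatrix_apply, eq_comm]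

open Classical in
lemma perm_match {V : Type} [Fintype V] (A : V → V → Prop) (R : ℕ)
    (J : V → V → ℕ) (hJ : S2.isHD A R J) (σ : Equiv.Perm (V ⊕ V)) :
    S2.isUMatch A (fun u v => if σ (Sum.inl u) = Sum.inl v ∧ J u v ≠ 0 then 1 else 0) := by
  obtain ⟨hA, -, -, hH⟩ := hJ
  refine ⟨fun u v h => by simp [hA u v h], fun u v => by dsimp only; split_ifs <;> simp, ?_⟩
  intro v
  have hin : ∑ u, (if σ (Sum.inl u) = Sum.inl v ∧ J u v ≠ 0 then 1 else 0) ≤ 1 := by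
    rw [← Finset.card_filter, Finset.card_le_one]
    intro a ha b hb
    simp only [Finset.mem_filter] at ha hb
    exact Sum.inl_injective (σ.injective (ha.2.1.trans hb.2.1.symm))
  have hout : ∑ u, (if σ (Sum.inl v) = Sum.inl u ∧ J v u ≠ 0 then 1 else 0) ≤ 1 := by
    rw [← Finset.card_filter, Finset.card_le_one]
    intro a ha b hb
    simp only [Finset.mem_filter] at ha hb
    exact Sum.inl_injective (ha.2.1.symm.trans hb.2.1)
  dsimp only
  by_cases h : 0 < ∑ u, J u v
  · have h0 := hH v h
    have : ∑ u, (if σ (Sum.inl v) = Sum.inl u ∧ J v u ≠ 0 then 1 else 0) = 0 := by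
      rw [Finset.sum_eq_zero_iff] at h0 ⊢
      intro u hu
      simp [h0 u hu]
    omega
  · have h0 : ∑ u, J u v = 0 := by omega
    have : ∑ u, (if σ (Sum.inl u) = Sum.inl v ∧ J u v ≠ 0 then 1 else 0) = 0 := by
      rw [Finset.sum_eq_zero_iff] at h0 ⊢
      intro u hu
      simp [h0 u hu]
    omega


/-- For a loopless directed multigraph `D` with exactly `R` parallel arcs
of the same positive weight between each `A`-related ordered pair (never both
directions), and `r(v) = R` for every vertex, the maximum total weight of a half-duplex
subgraph of `D` equals `R` times the maximum weight of a matching in the underlying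
simple undirected graph of `D`. -/
theorem max_halfduplex_eq_R_mul_max_matching
    (V : Type) [Fintype V] [DecidableEq V]
    (R : ℕ) (hR : 1 ≤ R)
    (A : V → V → Prop) (hirr : ∀ v, ¬ A v v) (hanti : ∀ u v, A u v → ¬ A v u)
    (w : V → V → ℝ) (hwpos : ∀ u v, A u v → 0 < w u v) :
    ∃ M : V → V → ℕ,
      S2.isUMatch A M ∧
      (∀ M' : V → V → ℕ, S2.isUMatch A M' → S2.dwt w M' ≤ S2.dwt w M) ∧
      S2.isHD A R (fun u v => R * M u v) ∧
      S2.dwt w (fun u v => R * M u v) = (R : ℝ) * S2.dwt w M ∧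
      (∀ J : V → V → ℕ, S2.isHD A R J → S2.dwt w J ≤ (R : ℝ) * S2.dwt w M) := by
  classical
  have hfin : {M : V → V → ℕ | S2.isUMatch A M}.Finite :=
    (Set.finite_Iic (fun _ _ => 1 : V → V → ℕ)).subset fun M hM u v => hM.2.1 u v
  have hne : {M : V → V → ℕ | S2.isUMatch A M}.Nonempty :=
    ⟨fun _ _ => 0, by simp [S2.isUMatch]⟩
  obtain ⟨M, hM, hmax⟩ := Set.exists_max_image _ (S2.dwt w) hfin hne
  have hM' : S2.isUMatch A M := hM
  obtain ⟨hA, h1, hs⟩ := hM'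
  refine ⟨M, hM, hmax, ⟨?_, ?_, ?_, ?_⟩, ?_, ?_⟩
  · intro u v h
    simp [hA u v h]
  · intro u v
    exact (Nat.mul_le_mul_left R (h1 u v)).trans (by simp)
  · intro v
    simp only [← Finset.mul_sum, ← mul_add]
    exact (Nat.mul_le_mul_left R (hs v)).trans (by simp)
  · intro v h
    simp only [← Finset.mul_sum] at h ⊢
    have h2 := Nat.pos_of_mul_pos_left h
    have h3 := hs v
    have : ∑ u, M v u = 0 := by omega
    rw [this, mul_zero]
  · simp only [S2.dwt, Finset.mul_sum, Nat.cast_mul, mul_assoc]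
  · intro J hJ
    have hRpos : (0 : ℝ) < R := by exact_mod_cast hR
    obtain ⟨c, hc0, hc1, hcP⟩ := exists_perm_decomp (fun u v => (J u v : ℝ) / R)
      (fun u v => by positivity)
      (fun u => by
        rw [← Finset.sum_div, div_le_one hRpos]
        have := hJ.2.2.1 u
        have h : ∑ v, J u v ≤ R := by omega
        exact_mod_cast h)
      (fun v => by
        rw [← Finset.sum_div, div_le_one hRpos]
        have := hJ.2.2.1 v
        have h : ∑ u, J u v ≤ R := by omega
        exact_mod_cast h)
    let N : Equiv.Perm (V ⊕ V) → V → V → ℕ := fun σ u v =>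
      if σ (Sum.inl u) = Sum.inl v ∧ J u v ≠ 0 then 1 else 0
    have hN : ∀ σ, S2.dwt w (N σ) ≤ S2.dwt w M := fun σ => by
      refine hmax _ ?_
      have := perm_match A R J hJ σ
      show S2.isUMatch A (N σ)
      convert this
    have key : ∀ u v, (J u v : ℝ) = R * ∑ σ, c σ * (N σ u v : ℝ) := by
      intro u v
      by_cases h : J u v = 0
      · simp [N, h]
      · have h2 := hcP u v
        rw [div_eq_iff hRpos.ne'] at h2
        rw [h2, mul_comm]
        simp [N, h]
    have hd : S2.dwt w J = R * ∑ σ, c σ * S2.dwt w (N σ) := by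
      simp only [S2.dwt]
      simp_rw [key, Finset.mul_sum, Finset.sum_mul]
      rw [Finset.sum_comm (s := (Finset.univ : Finset (Equiv.Perm (V ⊕ V))))]
      refine Finset.sum_congr rfl fun u _ => ?_
      rw [Finset.sum_comm (s := (Finset.univ : Finset (Equiv.Perm (V ⊕ V))))]
      refine Finset.sum_congr rfl fun v _ => Finset.sum_congr rfl fun σ _ => ?_
      ring
    rw [hd]
    refine mul_le_mul_of_nonneg_left ?_ hRpos.le
    calc ∑ σ, c σ * S2.dwt w (N σ) ≤ ∑ σ, c σ * S2.dwt w M :=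
          Finset.sum_le_sum fun σ _ => mul_le_mul_of_nonneg_left (hN σ) (hc0 σ)
      _ = S2.dwt w M := by rw [← Finset.sum_mul, hc1, one_mul]
end

section
/- Let Z = C_1 ∧ … ∧ C_K be a CNF formula over boolean variables x_1, …, x_L, where each clause C_k is a nonempty set of literals from {x_1, ¬x_1, …, x_L, ¬x_L}. Construct the finite loopless digraph D with vertex set {p_l, n_l, r_l : 1 ≤ l ≤ L} ∪ {q_k : 1 ≤ k ≤ K} and arcs: (p_l, q_k) whenever the literal x_l occurs in C_k; (n_l, q_k) whenever ¬x_l occurs in C_k; and (r_l, p_l), (r_l, n_l) for every l. Assign every arc weight 1, and set RF-chain numbers r(p_l) = max(outdeg(p_l), 1), r(n_l) = max(outdeg(n_l), 1), r(r_l) = 1, r(q_k) = 1. Then Z is satisfiable if and only if D has a half-duplex subgraph containing exactly K + L arcs (i.e., of total weight K + L). -/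
namespace S3

/-- Vertex set of the reduction digraph: `Sum.inl (l, i)` with `i = 0, 1, 2` is
`p_l`, `n_l`, `r_l` respectively, and `Sum.inr k` is the clause vertex `q_k`. -/
abbrev V3 (L K : ℕ) := (Fin L × Fin 3) ⊕ Fin K

/-- Arcs of the reduction digraph: `(p_l, q_k)` when `x_l ∈ C_k`,
`(n_l, q_k)` when `¬x_l ∈ C_k`, and `(r_l, p_l)`, `(r_l, n_l)` for every `l`.
A clause is a finite set of literals `(l, tt) = x_l`, `(l, ff) = ¬x_l`. -/
def arc3 {L K : ℕ} (C : Fin K → Finset (Fin L × Bool)) : V3 L K → V3 L K → Prop :=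
  fun a b =>
    match a, b with
    | Sum.inl (l, i), Sum.inr k =>
        (i.val = 0 ∧ (l, true) ∈ C k) ∨ (i.val = 1 ∧ (l, false) ∈ C k)
    | Sum.inl (l, i), Sum.inl (l', i') => i.val = 2 ∧ l = l' ∧ (i'.val = 0 ∨ i'.val = 1)
    | _, _ => False

/-- RF-chain numbers: `r(p_l) = max (outdeg p_l) 1`, `r(n_l) = max (outdeg n_l) 1`,
`r(r_l) = 1`, `r(q_k) = 1`. -/
def r3 {L K : ℕ} (C : Fin K → Finset (Fin L × Bool)) : V3 L K → ℕ :=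
  fun a =>
    match a with
    | Sum.inl (l, i) =>
        if i.val = 0 then max (Finset.univ.filter (fun k : Fin K => (l, true) ∈ C k)).card 1
        else if i.val = 1 then
          max (Finset.univ.filter (fun k : Fin K => (l, false) ∈ C k)).card 1
        else 1
    | Sum.inr _ => 1

/-- `J` is a half-duplex subgraph of the reduction digraph: a set of arcs such that
every vertex `v` is incident (as head or tail) to at most `r(v)` arcs of `J`,
and no vertex is both head of some arc of `J` and tail of some arc of `J`. -/
def isHDS {L K : ℕ} (C : Fin K → Finset (Fin L × Bool))
    (J : Finset (V3 L K × V3 L K)) : Prop :=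
  (∀ a ∈ J, arc3 C a.1 a.2) ∧
  (∀ v : V3 L K, (J.filter (fun a => a.1 = v ∨ a.2 = v)).card ≤ r3 C v) ∧
  (∀ v : V3 L K, (∃ a ∈ J, a.2 = v) → ∀ a ∈ J, a.1 ≠ v)

end S3

namespace S3

def lab {L K : ℕ} (a : V3 L K × V3 L K) : Fin K ⊕ Fin L :=
  match a.2 with
  | Sum.inr k => Sum.inl k
  | Sum.inl (l, _) => Sum.inr l

def bc (b : Bool) : Fin 3 := if b then 0 else 1

def mk {L K : ℕ} (a : Fin L → Bool) (p : Fin K → Fin L × Bool) :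
    Fin K ⊕ Fin L → V3 L K × V3 L K
  | Sum.inl k => (Sum.inl ((p k).1, bc (p k).2), Sum.inr k)
  | Sum.inr l => (Sum.inl (l, 2), Sum.inl (l, bc (!(a l))))

theorem lab_mk {L K : ℕ} (a : Fin L → Bool) (p : Fin K → Fin L × Bool) (x) :
    lab (mk a p x) = x := by
  rcases x with k | l <;> rfl

theorem bc_inj {b c : Bool} (h : bc b = bc c) : b = c := by
  revert h; cases b <;> cases c <;> decide

theorem bc_ne (b : Bool) : bc b ≠ 2 := by cases b <;> decide

theorem r3_bc {L K : ℕ} (C : Fin K → Finset (Fin L × Bool)) (l : Fin L) (b : Bool) :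
    r3 C (Sum.inl (l, bc b)) =
      max (Finset.univ.filter (fun k : Fin K => (l, b) ∈ C k)).card 1 := by
  cases b <;> simp [r3, bc]

theorem forward {L K : ℕ} (C : Fin K → Finset (Fin L × Bool)) (a : Fin L → Bool)
    (p : Fin K → Fin L × Bool) (hp : ∀ k, p k ∈ C k) (ha : ∀ k, a (p k).1 = (p k).2) :
    isHDS C (Finset.univ.image (mk a p)) := by
  refine ⟨?_, ?_, ?_⟩
  · intro x hx
    obtain ⟨y, -, rfl⟩ := Finset.mem_image.1 hx
    rcases y with k | l
    · have := hp k
      rcases h : p k with ⟨l, b⟩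
      rw [h] at this
      cases b <;> simp [mk, arc3, h, bc, this]
    · cases h : a l <;> simp [mk, arc3, h, bc]
  · intro v
    have one : ∀ y, (∀ x, (mk a p x).1 = v ∨ (mk a p x).2 = v → x = y) →
        ((Finset.univ.image (mk a p)).filter (fun a => a.1 = v ∨ a.2 = v)).card ≤ 1 := by
      intro y hy
      rw [Finset.card_le_one]
      intro s hs t ht
      simp only [Finset.mem_filter, Finset.mem_image, Finset.mem_univ, true_and] at hs ht
      obtain ⟨⟨s, rfl⟩, hs⟩ := hs
      obtain ⟨⟨t, rfl⟩, ht⟩ := ht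
      rw [hy s hs, hy t ht]
    rcases v with ⟨l, i⟩ | k
    · by_cases hi : i = 2
      · subst hi
        refine (one (Sum.inr l) ?_).trans (by simp [r3])
        rintro (k | m) h
        · have := bc_ne (p k).2
          simp [mk, this] at h
        · have := bc_ne (!(a m))
          simp [mk, this] at h
          simp [h]
      · obtain ⟨b, rfl⟩ : ∃ b, i = bc b := by
          fin_cases i
          · exact ⟨true, rfl⟩
          · exact ⟨false, rfl⟩
          · exact absurd rfl hi
        rw [r3_bc]
        by_cases hb : a l = b
        · refine le_trans ?_ (le_max_left _ _)
          refine le_trans (Finset.card_le_card (t := (Finset.univ.filter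
            (fun k : Fin K => (l, b) ∈ C k)).image (fun k => mk a p (Sum.inl k))) ?_)
            Finset.card_image_le
          intro s hs
          simp only [Finset.mem_filter, Finset.mem_image, Finset.mem_univ, true_and] at hs ⊢
          obtain ⟨⟨x, rfl⟩, h⟩ := hs
          rcases x with k | m
          · refine ⟨k, ?_, rfl⟩
            simp only [mk, Sum.inl.injEq, Prod.mk.injEq, reduceCtorEq, or_false] at h
            have := hp k
            rwa [show p k = (l, b) from Prod.ext h.1 (bc_inj h.2)] at this
          · exfalso
            simp only [mk, Sum.inl.injEq, Prod.mk.injEq] at h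
            rcases h with h | h
            · exact bc_ne b h.2.symm
            · have := bc_inj h.2
              rw [h.1, hb] at this
              cases b <;> simp at this
        · refine le_trans (one (Sum.inr l) ?_) (le_max_right _ _)
          rintro (k | m) h
          · simp only [mk, Sum.inl.injEq, Prod.mk.injEq, reduceCtorEq, or_false] at h
            have := ha k
            rw [h.1, bc_inj h.2] at this
            exact absurd this hb
          · simp only [mk, Sum.inl.injEq, Prod.mk.injEq] at h
            rcases h with h | h <;> rw [h.1]
    · refine one (Sum.inl k) ?_
      rintro (k | m) h
      · simpa [mk] using h
      · simp [mk] at h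
  · rintro v ⟨s, hs, rfl⟩ t ht h
    obtain ⟨s, -, rfl⟩ := Finset.mem_image.1 hs
    obtain ⟨t, -, rfl⟩ := Finset.mem_image.1 ht
    rcases s with k | l
    · rcases t with k | m <;> simp [mk] at h
    · rcases t with k | m
      · simp only [mk, Sum.inl.injEq, Prod.mk.injEq] at h
        have h2 := bc_inj h.2
        have := ha k
        rw [h2, h.1] at this
        cases h : a l <;> simp [h] at this
      · simp only [mk, Sum.inl.injEq, Prod.mk.injEq] at h
        exact bc_ne _ h.2.symm

theorem lab_spec {L K : ℕ} (C : Fin K → Finset (Fin L × Bool)) (x : V3 L K × V3 L K)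
    (h : arc3 C x.1 x.2) :
    (∃ k l b, x = (Sum.inl (l, bc b), Sum.inr k) ∧ (l, b) ∈ C k) ∨
    (∃ l b, x = (Sum.inl (l, 2), Sum.inl (l, bc b))) := by
  rcases x with ⟨⟨l, i⟩ | k, ⟨m, j⟩ | k'⟩
  · right
    obtain ⟨h1, rfl, h2⟩ := h
    have hi : i = 2 := Fin.ext h1
    subst hi
    rcases h2 with h2 | h2
    · exact ⟨l, true, by rw [show j = bc true from Fin.ext h2]⟩
    · exact ⟨l, false, by rw [show j = bc false from Fin.ext h2]⟩
  · left
    rcases h with ⟨h1, h2⟩ | ⟨h1, h2⟩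
    · exact ⟨k', l, true, by rw [show i = bc true from Fin.ext h1], h2⟩
    · exact ⟨k', l, false, by rw [show i = bc false from Fin.ext h1], h2⟩
  · exact h.elim
  · exact h.elim

theorem backward {L K : ℕ} (C : Fin K → Finset (Fin L × Bool))
    (J : Finset (V3 L K × V3 L K)) (hJ : isHDS C J) (hc : J.card = K + L) :
    ∃ a : Fin L → Bool, ∀ k, ∃ p ∈ C k, a p.1 = p.2 := by
  obtain ⟨h1, h2, h3⟩ := hJ
  have inj : Set.InjOn lab (J : Set (V3 L K × V3 L K)) := by
    intro x hx y hy hxy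
    have key : ∀ v, r3 C v = 1 → (x.1 = v ∨ x.2 = v) → (y.1 = v ∨ y.2 = v) → x = y := by
      intro v hv hxv hyv
      have := h2 v
      rw [hv, Finset.card_le_one] at this
      exact this x (Finset.mem_filter.2 ⟨hx, hxv⟩) y (Finset.mem_filter.2 ⟨hy, hyv⟩)
    rcases lab_spec C x (h1 x hx) with ⟨k, l, b, ex, -⟩ | ⟨l, b, ex⟩ <;>
    rcases lab_spec C y (h1 y hy) with ⟨k', l', b', ey, -⟩ | ⟨l', b', ey⟩ <;>
    simp only [ex, ey, lab, Sum.inl.injEq, Sum.inr.injEq, reduceCtorEq] at hxy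
    · exact key (Sum.inr k) rfl (by simp [ex]) (by simp [ey, hxy])
    · exact key (Sum.inl (l, 2)) rfl (by simp [ex]) (by simp [ey, hxy])
  have surj : J.image lab = Finset.univ := by
    apply Finset.eq_univ_of_card
    rw [Finset.card_image_of_injOn inj, hc]
    simp
  have ex : ∀ t, ∃ x ∈ J, lab x = t := fun t =>
    Finset.mem_image.1 (surj ▸ Finset.mem_univ t)
  have hl : ∀ l : Fin L, ∃ b, ((Sum.inl (l, 2), Sum.inl (l, bc (!b))) : V3 L K × V3 L K) ∈ J := by
    intro l
    obtain ⟨x, hx, hxl⟩ := ex (Sum.inr l)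
    rcases lab_spec C x (h1 x hx) with ⟨k, l', b, rfl, -⟩ | ⟨l', b, rfl⟩
    · simp [lab] at hxl
    · simp only [lab, Sum.inr.injEq] at hxl
      subst hxl
      exact ⟨!b, by simpa using hx⟩
  choose a ha using hl
  refine ⟨a, fun k => ?_⟩
  obtain ⟨x, hx, hxl⟩ := ex (Sum.inl k)
  rcases lab_spec C x (h1 x hx) with ⟨k', l, b, rfl, hm⟩ | ⟨l', b, rfl⟩
  · simp only [lab, Sum.inl.injEq] at hxl
    subst hxl
    refine ⟨_, hm, ?_⟩
    by_contra hne
    have hb : (!(a l)) = b := by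
      revert hne
      cases a l <;> cases b <;> simp
    exact h3 (Sum.inl (l, bc b)) ⟨_, ha l, by simp [hb]⟩ _ hx rfl
  · simp [lab] at hxl

end S3

/-- A CNF formula `Z` (clauses `C k`, all nonempty) is satisfiable iff the
reduction digraph has a half-duplex subgraph with exactly `K + L` arcs. -/
theorem sat_iff_halfduplex_subgraph_card
    (L K : ℕ) (C : Fin K → Finset (Fin L × Bool)) (hCne : ∀ k, (C k).Nonempty) :
    (∃ a : Fin L → Bool, ∀ k, ∃ p ∈ C k, a p.1 = p.2) ↔
    (∃ J : Finset (S3.V3 L K × S3.V3 L K), S3.isHDS C J ∧ J.card = K + L) := by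
  constructor
  · rintro ⟨a, h⟩
    choose p hp ha using h
    refine ⟨_, S3.forward C a p hp ha, ?_⟩
    rw [Finset.card_image_of_injective _
      (Function.LeftInverse.injective (S3.lab_mk a p))]
    simp
  · rintro ⟨J, hJ, hc⟩
    exact S3.backward C J hJ hc
end

section
/- Let Z = C_1 ∧ … ∧ C_K be a CNF formula over boolean variables x_1, …, x_L, where each clause C_k is a nonempty set of literals. Construct the directed network D with relay BS vertices {p_l^{(1)}, p_l^{(2)}, n_l^{(1)}, n_l^{(2)} : 1 ≤ l ≤ L} ∪ {q_k : 1 ≤ k ≤ K} and macro BS vertices {r_l^{(1)}, r_l^{(2)}, r_l^{(3)}, r_l^{(4)} : 1 ≤ l ≤ L}; arcs of capacity 1: (p_l^{(1)}, q_k) and (p_l^{(2)}, q_k) whenever x_l occurs in C_k, and (n_l^{(1)}, q_k) and (n_l^{(2)}, q_k) whenever ¬x_l occurs in C_k; arcs of capacity K/2 + 1: (r_l^{(1)}, p_l^{(1)}), (r_l^{(1)}, n_l^{(1)}), (r_l^{(2)}, p_l^{(2)}), (r_l^{(2)}, n_l^{(2)}), (r_l^{(3)}, p_l^{(2)}), (r_l^{(3)},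 n_l^{(1)}), (r_l^{(4)}, p_l^{(1)}), (r_l^{(4)}, n_l^{(2)}); RF-chain numbers: r(v) = max(outdeg(v), 2) for the vertices p_l^{(m)} and n_l^{(m)}, and r(v) = 1 for all vertices r_l^{(m)} and q_k. Then Z is satisfiable if and only if D has a unit-time half-duplex schedule whose max-min throughput equals 1 and whose network throughput equals 4L(K/2 + 1). -/
namespace S4

/-- Vertex set of the reduction network: `Sum.inl (l, i)` with
`i = 0,1,2,3` being `p_l^{(1)}, p_l^{(2)}, n_l^{(1)}, n_l^{(2)}` (relay BSs),
`i = 4,5,6,7` being `r_l^{(1)}, r_l^{(2)}, r_l^{(3)}, r_l^{(4)}` (macro BSs),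
and `Sum.inr k` the relay BS `q_k`. -/
abbrev V4 (L K : ℕ) := (Fin L × Fin 8) ⊕ Fin K

/-- Relay BSs: all vertices except the `r_l^{(m)}`. -/
def relay4 {L K : ℕ} : V4 L K → Bool :=
  fun a =>
    match a with
    | Sum.inl (_, i) => decide (i.val < 4)
    | Sum.inr _ => true

/-- Capacity function (zero means: no arc).  Arcs of capacity `1` go from
`p_l^{(1)}, p_l^{(2)}` to `q_k` when `x_l ∈ C_k` and from `n_l^{(1)}, n_l^{(2)}`
to `q_k` when `¬x_l ∈ C_k`; arcs of capacity `K/2 + 1` go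
`(r^{(1)},p^{(1)}), (r^{(1)},n^{(1)}), (r^{(2)},p^{(2)}), (r^{(2)},n^{(2)}),
(r^{(3)},p^{(2)}), (r^{(3)},n^{(1)}), (r^{(4)},p^{(1)}), (r^{(4)},n^{(2)})`. -/
noncomputable def cap4 {L K : ℕ} (C : Fin K → Finset (Fin L × Bool)) :
    V4 L K → V4 L K → ℝ :=
  fun a b =>
    match a, b with
    | Sum.inl (l, i), Sum.inr k =>
        if ((i.val = 0 ∨ i.val = 1) ∧ (l, true) ∈ C k) ∨
           ((i.val = 2 ∨ i.val = 3) ∧ (l, false) ∈ C k) then 1 else 0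
    | Sum.inl (l, i), Sum.inl (l', j) =>
        if l = l' ∧ ((i.val = 4 ∧ (j.val = 0 ∨ j.val = 2)) ∨
                     (i.val = 5 ∧ (j.val = 1 ∨ j.val = 3)) ∨
                     (i.val = 6 ∧ (j.val = 1 ∨ j.val = 2)) ∨
                     (i.val = 7 ∧ (j.val = 0 ∨ j.val = 3)))
        then (K : ℝ) / 2 + 1 else 0
    | _, _ => 0

/-- RF-chain numbers: `max(outdeg, 2)` at the `p`/`n` vertices, `1` elsewhere. -/
def r4 {L K : ℕ} (C : Fin K → Finset (Fin L × Bool)) : V4 L K → ℕ :=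
  fun a =>
    match a with
    | Sum.inl (l, i) =>
        if i.val = 0 ∨ i.val = 1 then
          max (Finset.univ.filter (fun k : Fin K => (l, true) ∈ C k)).card 2
        else if i.val = 2 ∨ i.val = 3 then
          max (Finset.univ.filter (fun k : Fin K => (l, false) ∈ C k)).card 2
        else 1
    | Sum.inr _ => 1

/-- Half-duplex subgraph: a set of arcs such that every vertex `v` is incident to at
most `r(v)` arcs and no vertex is simultaneously head of an arc and tail of an arc. -/
noncomputable def isHDS4 {L K : ℕ} (C : Fin K → Finset (Fin L × Bool))
    (J : Finset (V4 L K × V4 L K)) : Prop :=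
  (∀ a ∈ J, cap4 C a.1 a.2 ≠ 0) ∧
  (∀ v : V4 L K, (J.filter (fun a => a.1 = v ∨ a.2 = v)).card ≤ r4 C v) ∧
  (∀ v : V4 L K, (∃ a ∈ J, a.2 = v) → ∀ a ∈ J, a.1 ≠ v)

/-- A unit-time half-duplex schedule: nonnegative lengths supported on half-duplex
subgraphs, summing to `1`. -/
noncomputable def isSched4 {L K : ℕ} (C : Fin K → Finset (Fin L × Bool))
    (t : Finset (V4 L K × V4 L K) → ℝ) : Prop :=
  (∀ J, 0 ≤ t J) ∧ (∀ J, t J ≠ 0 → isHDS4 C J) ∧ (∑ J, t J = 1)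

/-- Throughput of a vertex `v` under schedule `t`: time-weighted capacity entering `v`
minus capacity leaving `v`. -/
noncomputable def tp4 {L K : ℕ} (C : Fin K → Finset (Fin L × Bool))
    (t : Finset (V4 L K × V4 L K) → ℝ) (v : V4 L K) : ℝ :=
  ∑ J, t J * ((∑ a ∈ J.filter (fun a => a.2 = v), cap4 C a.1 a.2) -
              (∑ a ∈ J.filter (fun a => a.1 = v), cap4 C a.1 a.2))

end S4

namespace S4

noncomputable def net {L K : ℕ} (C : Fin K → Finset (Fin L × Bool))
    (J : Finset (V4 L K × V4 L K)) (v : V4 L K) : ℝ :=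
  (∑ a ∈ J.filter (fun a => a.2 = v), cap4 C a.1 a.2) -
              (∑ a ∈ J.filter (fun a => a.1 = v), cap4 C a.1 a.2)

lemma cap_nonneg {L K : ℕ} (C : Fin K → Finset (Fin L × Bool)) (a b : V4 L K) :
    0 ≤ cap4 C a b := by
  rcases a with ⟨l, i⟩ | k <;> rcases b with ⟨l', j⟩ | k' <;> simp only [cap4]
  · split_ifs <;> positivity
  · split_ifs <;> simp
  · exact le_rfl
  · exact le_rfl

lemma cap_q_le {L K : ℕ} (C : Fin K → Finset (Fin L × Bool)) (a : V4 L K) (k : Fin K) :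
    cap4 C a (Sum.inr k) ≤ 1 := by
  rcases a with ⟨l, i⟩ | k' <;> simp only [cap4]
  · split_ifs <;> simp
  · simp

lemma cap_bal {L K : ℕ} (C : Fin K → Finset (Fin L × Bool)) (a b : V4 L K)
    (h : cap4 C a b ≠ 0) :
    (if relay4 b = true then cap4 C a b else 0) - (if relay4 a = true then cap4 C a b else 0)
      = if relay4 a = false then (K : ℝ) / 2 + 1 else 0 := by
  rcases a with ⟨l, i⟩ | k <;> rcases b with ⟨l', j⟩ | k'
  · simp only [cap4] at h ⊢
    split_ifs at h with hc
    · have h1 : j.val < 4 := by omega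
      have h2 : ¬ i.val < 4 := by omega
      rw [if_pos hc]
      simp [relay4, h1, h2]
    · simp at h
  · simp only [cap4] at h ⊢
    split_ifs at h with hc
    · have h2 : i.val < 4 := by omega
      rw [if_pos hc]
      simp [relay4, h2]
    · simp at h
  · simp [cap4] at h
  · simp [cap4] at h

lemma net_total {L K : ℕ} (C : Fin K → Finset (Fin L × Bool))
    (J : Finset (V4 L K × V4 L K)) (hJ : ∀ a ∈ J, cap4 C a.1 a.2 ≠ 0) :
    ∑ v ∈ Finset.univ.filter (fun v => relay4 v = true), net C J v
      = ((K : ℝ) / 2 + 1) * ((J.filter (fun a => relay4 a.1 = false)).card : ℝ) := by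
  have h : ∀ f : V4 L K × V4 L K → V4 L K,
      ∑ v ∈ Finset.univ.filter (fun v : V4 L K => relay4 v = true),
        ∑ a ∈ J.filter (fun a => f a = v), cap4 C a.1 a.2
      = ∑ a ∈ J, if relay4 (f a) = true then cap4 C a.1 a.2 else 0 := by
    intro f
    simp_rw [Finset.sum_filter]
    simp_rw [← Finset.sum_filter (fun v : V4 L K => relay4 v = true)]
    rw [Finset.sum_comm]
    apply Finset.sum_congr rfl
    intro a _
    rw [Finset.sum_ite_eq]
    simp
  unfold net
  rw [Finset.sum_sub_distrib, h (fun a => a.2), h (fun a => a.1), ← Finset.sum_sub_distrib]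
  rw [Finset.sum_congr rfl (fun a ha => cap_bal C a.1 a.2 (hJ a ha))]
  rw [← Finset.sum_filter, Finset.sum_const, nsmul_eq_mul, mul_comm]

lemma tp_eq {L K : ℕ} (C : Fin K → Finset (Fin L × Bool))
    (t : Finset (V4 L K × V4 L K) → ℝ) (v : V4 L K) : tp4 C t v = ∑ J, t J * net C J v := rfl

lemma macro_card (L K : ℕ) :
    (Finset.univ.filter (fun v : V4 L K => relay4 v = false)).card = 4 * L := by
  have : (Finset.univ.filter (fun v : V4 L K => relay4 v = false))
      = ((Finset.univ : Finset (Fin L)) ×ˢ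
        (Finset.univ.filter (fun i : Fin 8 => ¬ i.val < 4))).map Function.Embedding.inl := by
    ext v
    rw [Finset.mem_filter]
    rcases v with ⟨l, i⟩ | k <;> simp [relay4]
  rw [this, Finset.card_map, Finset.card_product]
  have h4 : (Finset.univ.filter (fun i : Fin 8 => ¬ i.val < 4)).card = 4 := by decide
  rw [h4]; simp [mul_comm]

lemma N_fiber {L K : ℕ} (J : Finset (V4 L K × V4 L K)) :
    (J.filter (fun a => relay4 a.1 = false)).card
     = ∑ v ∈ Finset.univ.filter (fun v : V4 L K => relay4 v = false),
        (J.filter (fun a => a.1 = v)).card := by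
  rw [Finset.card_eq_sum_card_fiberwise (f := fun a => a.1)
    (t := Finset.univ.filter (fun v : V4 L K => relay4 v = false))]
  · apply Finset.sum_congr rfl
    intro v hv
    congr 1
    ext a
    simp at hv ⊢
    intro h _
    rw [h]
    exact hv
  · intro a ha
    have ha := (Finset.mem_filter.1 (Finset.mem_coe.1 ha)).2
    simpa using ha

lemma r_macro {L K : ℕ} (C : Fin K → Finset (Fin L × Bool)) (v : V4 L K)
    (hv : relay4 v = false) : r4 C v = 1 := by
  rcases v with ⟨l, i⟩ | k
  · simp [relay4] at hv
    simp only [r4]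
    rw [if_neg (by omega), if_neg (by omega)]
  · rfl

lemma fiber_le {L K : ℕ} (C : Fin K → Finset (Fin L × Bool))
    (J : Finset (V4 L K × V4 L K)) (hJ : isHDS4 C J) (v : V4 L K) (hv : relay4 v = false) :
    (J.filter (fun a => a.1 = v)).card ≤ 1 := by
  rw [← r_macro C v hv]
  refine le_trans (Finset.card_le_card ?_) (hJ.2.1 v)
  intro a ha
  simp at ha ⊢
  exact ⟨ha.1, Or.inl ha.2⟩

lemma N_le {L K : ℕ} (C : Fin K → Finset (Fin L × Bool))
    (J : Finset (V4 L K × V4 L K)) (hJ : isHDS4 C J) :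
    (J.filter (fun a => relay4 a.1 = false)).card ≤ 4 * L := by
  rw [N_fiber, ← macro_card L K, Finset.card_eq_sum_ones]
  apply Finset.sum_le_sum
  intro v hv
  exact fiber_le C J hJ v (by simpa using hv)

lemma N_eq_iff {L K : ℕ} (C : Fin K → Finset (Fin L × Bool))
    (J : Finset (V4 L K × V4 L K)) (hJ : isHDS4 C J) :
    (J.filter (fun a => relay4 a.1 = false)).card = 4 * L ↔
      ∀ v : V4 L K, relay4 v = false → ∃ a ∈ J, a.1 = v := by
  rw [N_fiber, ← macro_card L K, Finset.card_eq_sum_ones, Finset.sum_eq_sum_iff_of_le]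
  · constructor
    · intro h v hv
      have := h v (by simpa using hv)
      obtain ⟨a, ha⟩ := Finset.card_pos.1 (by omega : 0 < (J.filter (fun a => a.1 = v)).card)
      exact ⟨a, by simpa using ha⟩
    · intro h v hv
      have hv : relay4 v = false := by simpa using hv
      obtain ⟨a, ha, hav⟩ := h v hv
      have h1 := fiber_le C J hJ v hv
      have : 0 < (J.filter (fun a => a.1 = v)).card := Finset.card_pos.2 ⟨a, by simp [ha, hav]⟩
      omega
  · intro v hv
    exact fiber_le C J hJ v (by simpa using hv)

lemma net_q_le {L K : ℕ} (C : Fin K → Finset (Fin L × Bool))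
    (J : Finset (V4 L K × V4 L K)) (hJ : isHDS4 C J) (k : Fin K) :
    net C J (Sum.inr k) ≤ ((J.filter (fun a => a.2 = Sum.inr k)).card : ℝ) ∧
    (J.filter (fun a => a.2 = (Sum.inr k : V4 L K))).card ≤ 1 := by
  constructor
  · unfold net
    have h1 : 0 ≤ ∑ a ∈ J.filter (fun a => a.1 = (Sum.inr k : V4 L K)), cap4 C a.1 a.2 :=
      Finset.sum_nonneg (fun a _ => cap_nonneg C _ _)
    have h2 : ∑ a ∈ J.filter (fun a => a.2 = (Sum.inr k : V4 L K)), cap4 C a.1 a.2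
        ≤ ∑ a ∈ J.filter (fun a => a.2 = (Sum.inr k : V4 L K)), (1 : ℝ) := by
      apply Finset.sum_le_sum
      intro a ha
      simp at ha
      rw [ha.2]
      exact cap_q_le C _ _
    simp at h2
    linarith
  · refine le_trans (Finset.card_le_card ?_) (hJ.2.1 (Sum.inr k))
    intro a ha
    simp at ha ⊢
    exact ⟨ha.1, Or.inr ha.2⟩

/-- If a convex combination of values at most `B` is at least `B`, all are `B`. -/
lemma conv_eq {ι : Type*} [Fintype ι] (t f : ι → ℝ) (B : ℝ) (ht : ∀ i, 0 ≤ t i)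
    (hs : ∑ i, t i = 1) (hf : ∀ i, t i ≠ 0 → f i ≤ B) (h : B ≤ ∑ i, t i * f i) :
    ∀ i, t i ≠ 0 → f i = B := by
  have h0 : ∑ i, t i * (B - f i) ≤ 0 := by
    simp_rw [mul_sub, Finset.sum_sub_distrib, ← Finset.sum_mul, hs]
    linarith
  have hn : ∀ i ∈ Finset.univ, 0 ≤ t i * (B - f i) := by
    intro i _
    by_cases hi : t i = 0
    · simp [hi]
    · exact mul_nonneg (ht i) (by linarith [hf i hi])
  have h1 := (Finset.sum_eq_zero_iff_of_nonneg hn).1 (le_antisymm h0 (Finset.sum_nonneg hn))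
  intro i hi
  have := h1 i (Finset.mem_univ i)
  rcases mul_eq_zero.1 this with h | h
  · exact absurd h hi
  · linarith

lemma tp_total {L K : ℕ} (C : Fin K → Finset (Fin L × Bool))
    (t : Finset (V4 L K × V4 L K) → ℝ) (ht : isSched4 C t) :
    ∑ v ∈ Finset.univ.filter (fun v => relay4 v = true), tp4 C t v
      = ∑ J, t J * (((K : ℝ) / 2 + 1) * ((J.filter (fun a => relay4 a.1 = false)).card : ℝ)) := by
  simp_rw [tp_eq]
  rw [Finset.sum_comm]
  apply Finset.sum_congr rfl
  intro J _
  rw [← Finset.mul_sum]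
  by_cases hJ : t J = 0
  · simp [hJ]
  · rw [net_total C J (ht.2.1 J hJ).1]

lemma backward (L K : ℕ)
    (C : Fin K → Finset (Fin L × Bool)) (t : Finset (V4 L K × V4 L K) → ℝ)
    (ht : isSched4 C t) (h1 : ∀ v, relay4 v = true → 1 ≤ tp4 C t v)
    (hsum : (∑ v ∈ Finset.univ.filter (fun v => relay4 v = true), tp4 C t v)
        = 4 * (L : ℝ) * ((K : ℝ) / 2 + 1)) :
    ∃ a : Fin L → Bool, ∀ k, ∃ p ∈ C k, a p.1 = p.2 := by
  obtain ⟨J, hJ⟩ : ∃ J, t J ≠ 0 := by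
    by_contra! h
    have := ht.2.2
    simp [h] at this
  have hD := ht.2.1 J hJ
  have hKp : (0 : ℝ) < (K : ℝ) / 2 + 1 := by positivity
  have hN : (J.filter (fun a => relay4 a.1 = false)).card = 4 * L := by
    have := conv_eq t (fun J => ((K : ℝ) / 2 + 1) *
      ((J.filter (fun a => relay4 a.1 = false)).card : ℝ)) (((K : ℝ) / 2 + 1) * (4 * L))
      ht.1 ht.2.2 ?_ ?_ J hJ
    · have := mul_left_cancel₀ hKp.ne' this
      exact_mod_cast this
    · intro J hJ
      apply mul_le_mul_of_nonneg_left _ hKp.le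
      exact_mod_cast N_le C J (ht.2.1 J hJ)
    · rw [tp_total C t ht] at hsum
      rw [hsum]
      apply le_of_eq; ring
  have hmac := (N_eq_iff C J hD).1 hN
  have hq : ∀ k : Fin K, ∃ e ∈ J, e.2 = (Sum.inr k : V4 L K) := by
    intro k
    have := conv_eq t (fun J => net C J (Sum.inr k)) 1 ht.1 ht.2.2 ?_ ?_ J hJ
    · have h2 := (net_q_le C J hD k).1
      rw [this] at h2
      have h3 : 0 < (J.filter (fun a => a.2 = (Sum.inr k : V4 L K))).card := by
        have : 1 ≤ (J.filter (fun a => a.2 = (Sum.inr k : V4 L K))).card := by exact_mod_cast h2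
        omega
      obtain ⟨e, he⟩ := Finset.card_pos.1 h3
      exact ⟨e, by simpa using he⟩
    · intro J hJ
      have h2 := net_q_le C J (ht.2.1 J hJ) k
      exact h2.1.trans (by exact_mod_cast h2.2)
    · exact h1 (Sum.inr k) rfl
  classical
  refine ⟨fun l => decide (∃ e ∈ J, ∃ i : Fin 8, i.val < 2 ∧ e.1 = Sum.inl (l, i)), fun k => ?_⟩
  obtain ⟨⟨e1, e2⟩, he, hek⟩ := hq k
  simp only at hek
  subst hek
  have hc := hD.1 _ he
  rcases e1 with ⟨l, i⟩ | k'
  swap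
  · simp [cap4] at hc
  simp only [cap4] at hc
  split_ifs at hc with hcc
  swap
  · simp at hc
  rcases hcc with ⟨hi, hm⟩ | ⟨hi, hm⟩
  · refine ⟨_, hm, ?_⟩
    simp only [decide_eq_true_eq]
    exact ⟨_, he, i, by omega, rfl⟩
  · refine ⟨_, hm, ?_⟩
    simp only [decide_eq_false_iff_not]
    rintro ⟨e', he', j, hj, hej⟩
    have key : ∃ r : Fin 8, 4 ≤ r.val ∧ ∀ x : Fin 8,
        ((r.val = 4 ∧ (x.val = 0 ∨ x.val = 2)) ∨
                     (r.val = 5 ∧ (x.val = 1 ∨ x.val = 3)) ∨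
                     (r.val = 6 ∧ (x.val = 1 ∨ x.val = 2)) ∨
                     (r.val = 7 ∧ (x.val = 0 ∨ x.val = 3))) → x = i ∨ x = j := by
      clear * - hi hj
      revert i j
      decide
    obtain ⟨r, hr, hx⟩ := key
    obtain ⟨⟨g1, g2⟩, hg, hgr⟩ := hmac (Sum.inl (l, r)) (by simp [relay4]; omega)
    simp only at hgr
    subst hgr
    have hc2 := hD.1 _ hg
    rcases g2 with ⟨l', x⟩ | k'
    · simp only [cap4] at hc2
      split_ifs at hc2 with hcc
      · obtain ⟨rfl, hcc⟩ := hcc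
        rcases hx x hcc with rfl | rfl
        · exact hD.2.2 _ ⟨_, hg, rfl⟩ _ he rfl
        · exact hD.2.2 _ ⟨_, hg, rfl⟩ _ he' hej
      · simp at hc2
    · simp only [cap4] at hc2
      split_ifs at hc2 with hcc
      · omega
      · simp at hc2

/-- transmitting vertex of a literal of sign `b` in slot `s` -/
def src (b s : Bool) : Fin 8 :=
  match b, s with
  | true, true => 0
  | true, false => 1
  | false, true => 2
  | false, false => 3

/-- target of macro `m` in slot `s` when the variable has value `b` -/
def tgt (b s : Bool) (m : Fin 4) : Fin 8 :=
  match b, s with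
  | true, true => ![2, 1, 1, 3] m
  | true, false => ![0, 3, 2, 0] m
  | false, true => ![0, 3, 1, 3] m
  | false, false => ![2, 1, 2, 0] m

def mac (m : Fin 4) : Fin 8 := ⟨m.val + 4, by omega⟩

def arc {L K : ℕ} (a : Fin L → Bool) (ch : Fin K → Fin L) (s : Bool) :
    (Fin L × Fin 4) ⊕ Fin K → V4 L K × V4 L K
  | Sum.inl (l, m) => (Sum.inl (l, mac m), Sum.inl (l, tgt (a l) s m))
  | Sum.inr k => (Sum.inl (ch k, src (a (ch k)) s), Sum.inr k)

lemma mac_inj : Function.Injective mac := by decide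

lemma arc_inj {L K : ℕ} (a : Fin L → Bool) (ch : Fin K → Fin L) (s : Bool) :
    Function.Injective (arc (K := K) a ch s) := by
  rintro (⟨l, m⟩ | k) (⟨l', m'⟩ | k') h <;> simp [arc] at h
  · obtain ⟨⟨rfl, h⟩, -⟩ := h
    rw [mac_inj h]
  · rw [h.2]

def JJ {L K : ℕ} (a : Fin L → Bool) (ch : Fin K → Fin L) (s : Bool) :
    Finset (V4 L K × V4 L K) := Finset.univ.map ⟨arc a ch s, arc_inj a ch s⟩

lemma cap_arc_m {L K : ℕ} (C : Fin K → Finset (Fin L × Bool)) (a : Fin L → Bool)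
    (ch : Fin K → Fin L) (s : Bool) (l : Fin L) (m : Fin 4) :
    cap4 C (arc a ch s (Sum.inl (l, m))).1 (arc a ch s (Sum.inl (l, m))).2
      = (K : ℝ) / 2 + 1 := by
  simp only [arc, cap4]
  rw [if_pos]
  refine ⟨trivial, ?_⟩
  generalize a l = b
  revert b s m
  decide

lemma cap_arc_q {L K : ℕ} (C : Fin K → Finset (Fin L × Bool)) (a : Fin L → Bool)
    (ch : Fin K → Fin L) (hch : ∀ k, (ch k, a (ch k)) ∈ C k) (s : Bool) (k : Fin K) :
    cap4 C (arc a ch s (Sum.inr k)).1 (arc a ch s (Sum.inr k)).2 = 1 := by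
  simp only [arc, cap4]
  rw [if_pos]
  have := hch k
  generalize a (ch k) = b at *
  cases b <;> cases s <;> simp [src, this]

lemma tgt_ne : ∀ (b s : Bool) (m : Fin 4), tgt b s m ≠ src b s := by decide
lemma tgt_ne_mac : ∀ (b s : Bool) (m m' : Fin 4), tgt b s m ≠ mac m' := by decide
lemma src_ne_mac : ∀ (b s : Bool) (m' : Fin 4), src b s ≠ mac m' := by decide
lemma tgt_card : ∀ (b s : Bool) (i : Fin 8),
    (Finset.univ.filter (fun m => tgt b s m = i)).card ≤ 2 := by decide

lemma JJ_hds {L K : ℕ} (C : Fin K → Finset (Fin L × Bool)) (a : Fin L → Bool)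
    (ch : Fin K → Fin L) (hch : ∀ k, (ch k, a (ch k)) ∈ C k) (s : Bool) :
    isHDS4 C (JJ a ch s) := by
  refine ⟨?_, ?_, ?_⟩
  · intro e he
    simp only [JJ, Finset.mem_map, Finset.mem_univ, true_and, Function.Embedding.coeFn_mk] at he
    obtain ⟨⟨l, m⟩ | k, rfl⟩ := he
    · rw [cap_arc_m]; positivity
    · rw [cap_arc_q C a ch hch]; simp
  · intro v
    rw [JJ, Finset.filter_map, Finset.card_map]
    rcases v with ⟨l, i⟩ | k
    · by_cases hi : ∃ m, i = mac m
      · obtain ⟨m, rfl⟩ := hi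
        rw [r_macro C _ (by simp [relay4, mac])]
        rw [← Finset.card_singleton (Sum.inl (l, m) : (Fin L × Fin 4) ⊕ Fin K)]
        apply Finset.card_le_card
        rintro (⟨l', m'⟩ | k) hw <;>
          simp [arc, tgt_ne_mac, src_ne_mac, mac_inj.eq_iff] at hw ⊢
        exact hw
      · have hi4 : i.val < 4 := by
          by_contra h
          exact hi ⟨⟨i.val - 4, by omega⟩, by ext; simp [mac]; omega⟩
        by_cases hs : i = src (a l) s
        · have : r4 C (Sum.inl (l, i)) =
              max (Finset.univ.filter (fun k : Fin K => (l, a l) ∈ C k)).card 2 := by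
            simp only [r4]
            subst hs
            generalize a l = b
            cases b <;> cases s <;> simp [src]
          rw [this]
          refine le_trans ?_ (le_max_left _ _)
          rw [← Finset.card_map (Function.Embedding.inr : Fin K ↪ (Fin L × Fin 4) ⊕ Fin K)]
          apply Finset.card_le_card
          rintro (⟨l', m'⟩ | k) hw
          · exfalso
            simp [arc] at hw
            rcases hw with ⟨rfl, h⟩ | ⟨rfl, h⟩
            · exact hi ⟨_, h.symm⟩
            · exact tgt_ne _ _ _ (h.trans hs)
          · simp [arc] at hw ⊢
            rw [← hw.1]
            exact hch k
        · have : 2 ≤ r4 C (Sum.inl (l, i)) := by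
            simp only [r4]
            split_ifs
            · exact le_max_right _ _
            · exact le_max_right _ _
            · omega
          refine le_trans ?_ this
          refine le_trans ?_ (tgt_card (a l) s i)
          rw [← Finset.card_map (⟨fun m => Sum.inl (l, m), fun x y h => by simpa using h⟩ :
            Fin 4 ↪ (Fin L × Fin 4) ⊕ Fin K)]
          apply Finset.card_le_card
          rintro (⟨l', m'⟩ | k) hw
          · simp [arc] at hw ⊢
            rcases hw with ⟨rfl, h⟩ | ⟨rfl, h⟩
            · exact absurd ⟨_, h.symm⟩ hi
            · exact ⟨m', h, rfl⟩
          · exfalso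
            simp [arc] at hw
            obtain ⟨rfl, h⟩ := hw
            exact hs h.symm
    · have : r4 C (Sum.inr k) = 1 := rfl
      rw [this, ← Finset.card_singleton (Sum.inr k : (Fin L × Fin 4) ⊕ Fin K)]
      apply Finset.card_le_card
      rintro (⟨l', m'⟩ | k) hw <;> simp [arc] at hw ⊢
      exact hw
  · rintro v ⟨e, he, rfl⟩ f hf
    simp only [JJ, Finset.mem_map, Finset.mem_univ, true_and, Function.Embedding.coeFn_mk] at he hf
    obtain ⟨⟨l, m⟩ | k, rfl⟩ := he <;> obtain ⟨⟨l', m'⟩ | k', rfl⟩ := hf <;> simp [arc]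
    · intro _ h; exact tgt_ne_mac _ _ _ _ h.symm
    · rintro rfl h; exact tgt_ne _ _ _ h.symm

lemma JJ_N {L K : ℕ} (C : Fin K → Finset (Fin L × Bool)) (a : Fin L → Bool)
    (ch : Fin K → Fin L) (hch : ∀ k, (ch k, a (ch k)) ∈ C k) (s : Bool) :
    ((JJ a ch s).filter (fun e => relay4 e.1 = false)).card = 4 * L := by
  rw [N_eq_iff C _ (JJ_hds C a ch hch s)]
  rintro (⟨l, i⟩ | k) hv
  · simp [relay4] at hv
    refine ⟨arc a ch s (Sum.inl (l, ⟨i.val - 4, by omega⟩)), by simp [JJ], ?_⟩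
    simp [arc, mac]
    ext; simp; omega
  · simp [relay4] at hv

lemma net_JJ {L K : ℕ} (C : Fin K → Finset (Fin L × Bool)) (a : Fin L → Bool)
    (ch : Fin K → Fin L) (hch : ∀ k, (ch k, a (ch k)) ∈ C k) (s : Bool) (v : V4 L K) :
    net C (JJ a ch s) v =
      ((∑ l, ∑ m, if (Sum.inl (l, tgt (a l) s m) : V4 L K) = v then (K : ℝ) / 2 + 1 else 0)
       + ∑ k, if (Sum.inr k : V4 L K) = v then (1 : ℝ) else 0)
      - ((∑ l, ∑ m, if (Sum.inl (l, mac m) : V4 L K) = v then (K : ℝ) / 2 + 1 else 0)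
       + ∑ k, if (Sum.inl (ch k, src (a (ch k)) s) : V4 L K) = v then (1 : ℝ) else 0) := by
  unfold net
  rw [Finset.sum_filter, Finset.sum_filter, JJ, Finset.sum_map, Finset.sum_map,
    Fintype.sum_sum_type, Fintype.sum_sum_type, Fintype.sum_prod_type, Fintype.sum_prod_type]
  simp only [Function.Embedding.coeFn_mk, cap_arc_m, cap_arc_q C a ch hch]
  simp only [arc]
  congr!

lemma net_JJ_q {L K : ℕ} (C : Fin K → Finset (Fin L × Bool)) (a : Fin L → Bool)
    (ch : Fin K → Fin L) (hch : ∀ k, (ch k, a (ch k)) ∈ C k) (s : Bool) (k : Fin K) :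
    net C (JJ a ch s) (Sum.inr k) = 1 := by
  rw [net_JJ C a ch hch]
  simp

lemma net_JJ_pn {L K : ℕ} (C : Fin K → Finset (Fin L × Bool)) (a : Fin L → Bool)
    (ch : Fin K → Fin L) (hch : ∀ k, (ch k, a (ch k)) ∈ C k) (s : Bool) (l : Fin L)
    (i : Fin 8) (hi : i.val < 4) :
    ((Finset.univ.filter (fun m => tgt (a l) s m = i)).card : ℝ) * ((K : ℝ) / 2 + 1)
      - (if src (a l) s = i then (K : ℝ) else 0) ≤
    net C (JJ a ch s) (Sum.inl (l, i)) := by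
  rw [net_JJ C a ch hch]
  have e1 : (∑ l', ∑ m, if (Sum.inl (l', tgt (a l') s m) : V4 L K) = Sum.inl (l, i)
      then (K : ℝ) / 2 + 1 else 0) =
      ((Finset.univ.filter (fun m => tgt (a l) s m = i)).card : ℝ) * ((K : ℝ) / 2 + 1) := by
    rw [Finset.sum_eq_single l]
    · simp only [Sum.inl.injEq, Prod.mk.injEq, true_and]
      rw [← Finset.sum_filter, Finset.sum_const, nsmul_eq_mul]
    · intro l' _ hl
      simp [hl]
    · simp
  have e2 : (∑ l', ∑ m, if (Sum.inl (l', mac m) : V4 L K) = Sum.inl (l, i)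
      then (K : ℝ) / 2 + 1 else 0) = 0 := by
    apply Finset.sum_eq_zero; intro l' _
    apply Finset.sum_eq_zero; intro m _
    rw [if_neg]
    intro h
    simp at h
    have := h.2
    subst this
    simp [mac] at hi
  have e3 : (∑ k, if (Sum.inl (ch k, src (a (ch k)) s) : V4 L K) = Sum.inl (l, i)
      then (1 : ℝ) else 0) ≤ (if src (a l) s = i then (K : ℝ) else 0) := by
    split_ifs with hs
    · calc _ ≤ ∑ k : Fin K, (1 : ℝ) := by
            apply Finset.sum_le_sum; intro k _; split_ifs <;> simp
        _ = K := by simp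
    · apply le_of_eq
      apply Finset.sum_eq_zero; intro k _
      rw [if_neg]
      intro h
      simp at h
      obtain ⟨rfl, h⟩ := h
      exact hs h
  rw [e1, e2]
  simp only [reduceCtorEq, if_false, Finset.sum_const_zero]
  linarith

lemma tgt_two : ∀ (b : Bool) (i : Fin 8), i.val < 4 →
    (Finset.univ.filter (fun m => tgt b true m = i)).card +
    (Finset.univ.filter (fun m => tgt b false m = i)).card = 2 := by decide

lemma src_not_both : ∀ (b : Bool) (i : Fin 8), ¬ (src b true = i ∧ src b false = i) := by decide

lemma forward (L K : ℕ) (hK : 0 < K)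
    (C : Fin K → Finset (Fin L × Bool))
    (h : ∃ a : Fin L → Bool, ∀ k, ∃ p ∈ C k, a p.1 = p.2) :
    ∃ t : Finset (V4 L K × V4 L K) → ℝ,
      isSched4 C t ∧
      (∀ v, relay4 v = true → 1 ≤ tp4 C t v) ∧
      (∃ v, relay4 v = true ∧ tp4 C t v = 1) ∧
      (∑ v ∈ Finset.univ.filter (fun v => relay4 v = true), tp4 C t v)
        = 4 * (L : ℝ) * ((K : ℝ) / 2 + 1) := by
  obtain ⟨a, ha⟩ := h
  choose p hp hap using ha
  obtain ⟨ch, hchp⟩ : ∃ ch : Fin K → Fin L, ch = fun k => (p k).1 := ⟨_, rfl⟩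
  have hch : ∀ k, (ch k, a (ch k)) ∈ C k := by
    intro k
    rw [hchp]
    simp only [hap]
    exact hp k
  let t : Finset (V4 L K × V4 L K) → ℝ := fun J =>
    (if J = JJ a ch true then 1 / 2 else 0) + (if J = JJ a ch false then 1 / 2 else 0)
  have hsum : ∀ f : Finset (V4 L K × V4 L K) → ℝ, ∑ J, t J * f J =
      1 / 2 * f (JJ a ch true) + 1 / 2 * f (JJ a ch false) := by
    intro f
    simp only [t, add_mul, Finset.sum_add_distrib, ite_mul, zero_mul, Finset.sum_ite_eq',
      Finset.mem_univ, if_true]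
  have hq : ∀ k, tp4 C t (Sum.inr k) = 1 := by
    intro k
    rw [tp_eq, hsum, net_JJ_q C a ch hch, net_JJ_q C a ch hch]
    norm_num
  have hsched : isSched4 C t := by
    refine ⟨?_, ?_, ?_⟩
    · intro J
      simp only [t]
      split_ifs <;> norm_num
    · intro J hJ
      by_cases h1 : J = JJ a ch true
      · rw [h1]; exact JJ_hds C a ch hch _
      by_cases h2 : J = JJ a ch false
      · rw [h2]; exact JJ_hds C a ch hch _
      simp [t, h1, h2] at hJ
    · have := hsum (fun _ => 1)
      simp only [mul_one] at this
      rw [this]; norm_num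
  refine ⟨t, hsched, ?_, ⟨Sum.inr ⟨0, hK⟩, rfl, hq _⟩, ?_⟩
  · rintro (⟨l, i⟩ | k) hv
    · have hi : i.val < 4 := by simpa [relay4] using hv
      rw [tp_eq, hsum]
      have h1 := net_JJ_pn C a ch hch true l i hi
      have h2 := net_JJ_pn C a ch hch false l i hi
      have h3 : ((Finset.univ.filter (fun m => tgt (a l) true m = i)).card : ℝ) +
        ((Finset.univ.filter (fun m => tgt (a l) false m = i)).card : ℝ) = 2 := by
        exact_mod_cast tgt_two (a l) i hi
      have h4 : (if src (a l) true = i then (K : ℝ) else 0) +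
          (if src (a l) false = i then (K : ℝ) else 0) ≤ K := by
        have := src_not_both (a l) i
        split_ifs with x y
        · exact absurd ⟨x, y⟩ this
        · simp
        · simp
        · simp
      have h5 : (((Finset.univ.filter (fun m => tgt (a l) true m = i)).card : ℝ) +
        ((Finset.univ.filter (fun m => tgt (a l) false m = i)).card : ℝ)) * ((K : ℝ) / 2 + 1)
         = 2 * ((K : ℝ) / 2 + 1) := by rw [h3]
      rw [add_mul] at h5
      linarith
    · rw [hq]
  · rw [tp_total C t hsched, hsum, JJ_N C a ch hch, JJ_N C a ch hch]
    push_cast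
    ring

end S4

/-- A CNF formula `Z` (with `K ≥ 1` nonempty clauses over `L ≥ 1`
variables) is satisfiable iff the reduction network `D` admits a unit-time half-duplex
schedule whose max-min throughput (minimum throughput over relay BSs) equals `1` and
whose network throughput (sum of relay throughputs) equals `4·L·(K/2 + 1)`. -/
theorem sat_iff_halfduplex_schedule
    (L K : ℕ) (hL : 0 < L) (hK : 0 < K)
    (C : Fin K → Finset (Fin L × Bool)) (hCne : ∀ k, (C k).Nonempty) :
    (∃ a : Fin L → Bool, ∀ k, ∃ p ∈ C k, a p.1 = p.2) ↔
    (∃ t : Finset (S4.V4 L K × S4.V4 L K) → ℝ,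
      S4.isSched4 C t ∧
      (∀ v, S4.relay4 v = true → 1 ≤ S4.tp4 C t v) ∧
      (∃ v, S4.relay4 v = true ∧ S4.tp4 C t v = 1) ∧
      (∑ v ∈ Finset.univ.filter (fun v => S4.relay4 v = true), S4.tp4 C t v)
        = 4 * (L : ℝ) * ((K : ℝ) / 2 + 1)) := by
  constructor
  · exact S4.forward L K hK C
  · rintro ⟨t, ht, h1, -, h3⟩
    exact S4.backward L K C t ht h1 h3
end

section
/- Let D be a directed network in which, for each ordered pair (u,v) joined in the link network L, there are exactly d(u,v) = min(r(u), r(v)) parallel arcs from u to v (the MAX-SU-SM model). Define the sparse expanded network H as the digraph with vertex set {(v,i) : v a vertex of D, 1 ≤ i ≤ r(v)} and, for each link (u,v) of L, arcs ((u,j),(v,k)) for all 1 ≤ j ≤ r(u), 1 ≤ k ≤ r(v) if r(u) ≠ r(v), and only the diagonal arcs ((u,j),(v,j)) for 1 ≤ j ≤ r(u) if r(u) = r(v). Then for every half-duplex subgraph J of D there exists a matching M in H (a set of arcs of H no two of which share a vertex of H) such that, for every link (u,v), the number of arcs of M going from a copy of u to a copy of v equals the number of parallel arcs from u to v in J. 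-/
theorem aux_perm {W : Type} [Fintype W] [DecidableEq W] (k : ℕ) (A : W → W → ℕ)
    (hrow : ∀ i, ∑ j, A i j = k + 1) (hcol : ∀ j, ∑ i, A i j = k + 1) :
    ∃ σ : W → W, Function.Bijective σ ∧ ∀ i, 0 < A i (σ i) := by
  have h := (Finset.all_card_le_biUnion_card_iff_exists_injective
    (fun i : W => Finset.univ.filter (fun j => 0 < A i j))).1 (by
      intro s
      set B := s.biUnion (fun i : W => Finset.univ.filter (fun j => 0 < A i j)) with hB
      have h1 : ∑ i ∈ s, ∑ j, A i j = (k + 1) * s.card := by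
        simp [hrow, mul_comm]
      have h2 : ∑ i ∈ s, ∑ j, A i j = ∑ i ∈ s, ∑ j ∈ B, A i j := by
        apply Finset.sum_congr rfl
        intro i hi
        symm
        apply Finset.sum_subset (Finset.subset_univ _)
        intro j _ hj
        by_contra h0
        apply hj
        rw [hB, Finset.mem_biUnion]
        exact ⟨i, hi, by simp; omega⟩
      have h3 : ∑ i ∈ s, ∑ j ∈ B, A i j ≤ (k + 1) * B.card := by
        rw [Finset.sum_comm]
        calc ∑ j ∈ B, ∑ i ∈ s, A i j ≤ ∑ j ∈ B, ∑ i, A i j :=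
              Finset.sum_le_sum fun j _ => Finset.sum_le_sum_of_subset (Finset.subset_univ _)
          _ = (k + 1) * B.card := by simp [hcol, mul_comm]
      have h4 : (k + 1) * s.card ≤ (k + 1) * B.card := by omega
      exact Nat.le_of_mul_le_mul_left h4 (Nat.succ_pos k))
  obtain ⟨f, hf, hf'⟩ := h
  exact ⟨f, Finite.injective_iff_bijective.1 hf, fun i => by simpa using hf' i⟩

theorem aux_decomp {W : Type} [Fintype W] [DecidableEq W] (k : ℕ) : ∀ (A : W → W → ℕ)
    (_ : ∀ i, ∑ j, A i j = k) (_ : ∀ j, ∑ i, A i j = k),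
    ∃ S : W → W → Finset ℕ, (∀ i j, S i j ⊆ Finset.range k) ∧ (∀ i j, (S i j).card = A i j) ∧
      (∀ i j j' c, c ∈ S i j → c ∈ S i j' → j = j') ∧
      (∀ i i' j c, c ∈ S i j → c ∈ S i' j → i = i') := by
  induction k with
  | zero =>
    intro A hr hc
    refine ⟨fun _ _ => ∅, by simp, ?_, by simp, by simp⟩
    intro i j
    have := hr i
    rw [Finset.sum_eq_zero_iff] at this
    simp [this j (Finset.mem_univ _)]
  | succ k ih =>
    intro A hr hc
    obtain ⟨σ, hσ, hpos⟩ := aux_perm k A hr hc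
    have hsplit : ∀ i j, A i j = (A i j - if σ i = j then 1 else 0) + if σ i = j then 1 else 0 := by
      intro i j
      split_ifs with h
      · have := hpos i
        rw [h] at this
        omega
      · omega
    obtain ⟨S, h1, h2, h3, h4⟩ := ih (fun i j => A i j - if σ i = j then 1 else 0)
      (by
        intro i
        have := hr i
        rw [Finset.sum_congr rfl (fun j _ => hsplit i j), Finset.sum_add_distrib] at this
        simpa using this)
      (by
        intro j
        have := hc j
        rw [Finset.sum_congr rfl (fun i _ => hsplit i j), Finset.sum_add_distrib] at this
        obtain ⟨i0, rfl⟩ := hσ.2 j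
        simpa [hσ.1.eq_iff] using this)
    have hk : ∀ i j, k ∉ S i j := fun i j h => by simpa using h1 i j h
    refine ⟨fun i j => S i j ∪ if σ i = j then {k} else ∅, ?_, ?_, ?_, ?_⟩
    · intro i j c hc
      have := @h1 i j c
      simp only [Finset.mem_union, Finset.mem_range] at *
      split_ifs at hc <;> simp at hc <;> grind
    · intro i j
      rw [hsplit i j, ← h2 i j, Finset.card_union_of_disjoint]
      · split_ifs <;> simp
      · split_ifs <;> simp [hk]
    · intro i j j' c h h'
      have := h3 i j j' c
      have := hk i j
      have := hk i j'
      simp only [Finset.mem_union] at h h'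
      split_ifs at h h' <;> simp at h h' <;> grind
    · intro i i' j c h h'
      have := h4 i i' j c
      have := hk i j
      have := hk i' j
      have := @hσ.1 i i'
      simp only [Finset.mem_union] at h h'
      split_ifs at h h' <;> simp at h h' <;> grind

theorem aux_koenig {V : Type} [Fintype V] [DecidableEq V] (k : ℕ) (A : V → V → ℕ)
    (hrow : ∀ i, ∑ j, A i j ≤ k) (hcol : ∀ j, ∑ i, A i j ≤ k) :
    ∃ S : V → V → Finset ℕ, (∀ i j, S i j ⊆ Finset.range k) ∧ (∀ i j, (S i j).card = A i j) ∧
      (∀ i j j' c, c ∈ S i j → c ∈ S i j' → j = j') ∧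
      (∀ i i' j c, c ∈ S i j → c ∈ S i' j → i = i') := by
  obtain ⟨S, h1, h2, h3, h4⟩ := aux_decomp (W := V ⊕ V) k
    (fun x y => match x, y with
      | .inl i, .inl j => A i j
      | .inl i, .inr j => if i = j then k - ∑ l, A i l else 0
      | .inr i, .inl j => if i = j then k - ∑ l, A l i else 0
      | .inr i, .inr j => A j i)
    (by
      rintro (i | i)
      · have := hrow i
        simp
        omega
      · have := hcol i
        simp
        omega)
    (by
      rintro (i | i)
      · have := hcol i
        simp
        omega
      · have := hrow i
        simp
        omega)
  refine ⟨fun i j => S (.inl i) (.inl j), fun i j => h1 _ _, fun i j => h2 _ _, ?_, ?_⟩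
  · intro i j j' c h h'
    simpa using h3 _ _ _ _ h h'
  · intro i j j' c h h'
    simpa using h4 _ _ _ _ h h'

theorem aux_disj {V : Type} [DecidableEq V] (n : V → ℕ) (s : Finset V) : ∀ (F : Finset ℕ)
    (_ : ∑ v ∈ s, n v ≤ F.card),
    ∃ T : V → Finset ℕ, (∀ v ∈ s, T v ⊆ F ∧ (T v).card = n v) ∧
      (∀ v ∈ s, ∀ w ∈ s, ∀ c, c ∈ T v → c ∈ T w → v = w) := by
  induction s using Finset.induction_on with
  | empty => intro F _; exact ⟨fun _ => ∅, by simp, by simp⟩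
  | insert a s ha ih =>
    intro F hF
    rw [Finset.sum_insert ha] at hF
    obtain ⟨X, hX, hXc⟩ := Finset.exists_subset_card_eq (s := F) (n := n a) (by omega)
    obtain ⟨T, h1, h2⟩ := ih (F \ X) (by rw [Finset.card_sdiff_of_subset hX]; omega)
    refine ⟨fun v => if v = a then X else T v, ?_, ?_⟩
    · intro v hv
      by_cases h : v = a
      · subst h; simp [hX, hXc]
      · have := h1 v (Finset.mem_of_mem_insert_of_ne hv h)
        simp only [h, if_false]
        exact ⟨this.1.trans Finset.sdiff_subset, this.2⟩
    · intro v hv w hw c hc hc'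
      have e1 : ∀ v ∈ s, c ∈ T v → c ∉ X := fun v hv h =>
        (Finset.mem_sdiff.1 ((h1 v hv).1 h)).2
      grind

theorem aux_ext {V : Type} [Fintype V] [DecidableEq V] (n : V → ℕ) (R : ℕ)
    (hn : ∑ v, n v ≤ R) (P : V → Prop) (S : V → Finset ℕ)
    (hS : ∀ v, P v → S v ⊆ Finset.range R ∧ (S v).card = n v)
    (hd : ∀ v w c, P v → P w → c ∈ S v → c ∈ S w → v = w) :
    ∃ T : V → Finset ℕ, (∀ v, T v ⊆ Finset.range R) ∧ (∀ v, (T v).card = n v) ∧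
      (∀ v w c, c ∈ T v → c ∈ T w → v = w) ∧ (∀ v, P v → T v = S v) := by
  classical
  set U := (Finset.univ.filter P).biUnion S with hU
  have hUs : U ⊆ Finset.range R := by
    rw [hU, Finset.biUnion_subset]
    intro v hv
    exact (hS v (by simpa using hv)).1
  have hUc : U.card = ∑ v ∈ Finset.univ.filter P, n v := by
    rw [hU, Finset.card_biUnion]
    · exact Finset.sum_congr rfl fun v hv => (hS v (by simpa using hv)).2
    · intro v hv w hw hvw
      refine Finset.disjoint_left.2 ?_
      intro c hc hc'
      exact hvw (hd v w c (by simpa using hv) (by simpa using hw) hc hc')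
  have hsum : ∑ v ∈ Finset.univ.filter P, n v + ∑ v ∈ Finset.univ.filter (fun v => ¬ P v), n v
      = ∑ v, n v := by
    convert Finset.sum_filter_add_sum_filter_not Finset.univ P n
  obtain ⟨T, h1, h2⟩ := aux_disj n (Finset.univ.filter (fun v => ¬ P v)) (Finset.range R \ U) (by
    rw [Finset.card_sdiff_of_subset hUs, Finset.card_range, hUc]; omega)
  have hin : ∀ v c, P v → c ∈ S v → c ∈ U := fun v c hv hc =>
    Finset.mem_biUnion.2 ⟨v, by simpa using hv, hc⟩
  have hout : ∀ v c, ¬ P v → c ∈ T v → c ∈ Finset.range R ∧ c ∉ U := fun v c hv hc =>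
    Finset.mem_sdiff.1 ((h1 v (by simpa using hv)).1 hc)
  refine ⟨fun v => if P v then S v else T v, ?_, ?_, ?_, ?_⟩
  · intro v c hc
    by_cases hv : P v
    · simp only [hv, if_true] at hc
      exact (hS v hv).1 hc
    · simp only [hv, if_false] at hc
      exact (hout v c hv hc).1
  · intro v
    by_cases hv : P v
    · simp [hv, (hS v hv).2]
    · simp [hv, (h1 v (by simpa using hv)).2]
  · intro v w c hc hc'
    by_cases hv : P v <;> by_cases hw : P w <;> simp only [hv, hw, if_true, if_false] at hc hc'
    · exact hd v w c hv hw hc hc'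
    · exact absurd (hin v c hv hc) (hout w c hw hc').2
    · exact absurd (hin w c hw hc') (hout v c hv hc).2
    · exact h2 v (by simpa using hv) w (by simpa using hw) c hc hc'
  · intro v hv
    simp [hv]

theorem aux_bij (X Y : Finset ℕ) (h : X.card = Y.card) :
    ∃ e : ℕ → ℕ, (∀ c ∈ X, e c ∈ Y) ∧ (∀ c ∈ X, ∀ d ∈ X, e c = e d → c = d) ∧
      (X = Y → ∀ c, e c = c) := by
  by_cases hXY : X = Y
  · exact ⟨id, by simp [hXY], by simp, by simp⟩
  · let f := Finset.equivOfCardEq h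
    refine ⟨fun c => if hc : c ∈ X then f ⟨c, hc⟩ else 0, ?_, ?_, fun h => absurd h hXY⟩
    · intro c hc
      simp [hc]
    · intro c hc d hd hcd
      simp only [hc, hd, dif_pos] at hcd
      simpa using f.injective (Subtype.ext hcd)

/-- Let `D` be a directed network under the MAX-SU-SM model (link network
with adjacency `Adj`, `min (r u) (r v)` parallel arcs per link), and let `H` be the
sparse expanded network on vertices `Σ v, Fin (r v)` (all `r u · r v` arcs per link if
`r u ≠ r v`, only the diagonal arcs if `r u = r v`).  Every half-duplex subgraph of `D`
(given by its arc multiplicities `m`) is represented by a matching `M` in `H`: for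
every link `(u,v)`, the number of arcs of `M` from a copy of `u` to a copy of `v`
equals `m u v`. -/
theorem halfduplex_subgraph_as_matching_in_sparse_expanded_network
    (V : Type) [Fintype V] [DecidableEq V]
    (r : V → ℕ) (hr : ∀ v, 1 ≤ r v)
    (Adj : V → V → Prop) (hirr : ∀ v, ¬ Adj v v)
    (m : V → V → ℕ)
    (hsupp : ∀ u v, ¬ Adj u v → m u v = 0)
    (hbound : ∀ u v, m u v ≤ min (r u) (r v))
    (hdeg : ∀ v, ((∑ u, m u v) + ∑ u, m v u) ≤ r v)
    (hhd : ∀ v, 0 < ∑ u, m u v → (∑ u, m v u) = 0) :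
    ∃ M : Finset ((Σ v : V, Fin (r v)) × (Σ v : V, Fin (r v))),
      -- every element of `M` is an arc of the sparse expanded network `H`
      (∀ a ∈ M, Adj a.1.1 a.2.1 ∧ (r a.1.1 = r a.2.1 → a.1.2.val = a.2.2.val)) ∧
      -- `M` is a matching: no two (distinct) arcs share a vertex of `H`
      (∀ a ∈ M, ∀ b ∈ M, a ≠ b →
        a.1 ≠ b.1 ∧ a.1 ≠ b.2 ∧ a.2 ≠ b.1 ∧ a.2 ≠ b.2) ∧
      -- the multiplicities are preserved
      (∀ u v : V,
        (M.filter (fun a => a.1.1 = u ∧ a.2.1 = v)).card = m u v) := by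
  classical
  have hout : ∀ u, ∑ v, m u v ≤ r u := fun u => by have := hdeg u; omega
  have hin : ∀ v, ∑ u, m u v ≤ r v := fun v => by have := hdeg v; omega
  have hK : ∀ k, ∃ S : V → V → Finset ℕ, (∀ i j, S i j ⊆ Finset.range k) ∧
      (∀ i j, (S i j).card = if r i = k ∧ r j = k then m i j else 0) ∧
      (∀ i j j' c, c ∈ S i j → c ∈ S i j' → j = j') ∧
      (∀ i i' j c, c ∈ S i j → c ∈ S i' j → i = i') := by
    intro k
    apply aux_koenig k
    · intro i
      by_cases h : r i = k
      · rw [← h]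
        refine le_trans (Finset.sum_le_sum fun j _ => ?_) (hout i)
        split_ifs <;> omega
      · simp [h]
    · intro i
      by_cases h : r i = k
      · rw [← h]
        refine le_trans (Finset.sum_le_sum fun j _ => ?_) (hin i)
        split_ifs <;> omega
      · simp [h]
  choose S hS1 hS2 hS3 hS4 using hK
  have hT : ∀ u, ∃ T : V → Finset ℕ, (∀ v, T v ⊆ Finset.range (r u)) ∧
      (∀ v, (T v).card = m u v) ∧
      (∀ v w c, c ∈ T v → c ∈ T w → v = w) ∧ (∀ v, r u = r v → T v = S (r u) u v) := by
    intro u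
    refine aux_ext (m u) (r u) (hout u) (fun v => r u = r v) (S (r u) u) ?_ ?_
    · intro v hv
      exact ⟨hS1 _ _ _, by rw [hS2]; simp [hv]⟩
    · intro v w c _ _ h h'
      exact hS3 _ _ _ _ _ h h'
  have hT' : ∀ v, ∃ T : V → Finset ℕ, (∀ u, T u ⊆ Finset.range (r v)) ∧
      (∀ u, (T u).card = m u v) ∧
      (∀ u w c, c ∈ T u → c ∈ T w → u = w) ∧ (∀ u, r u = r v → T u = S (r v) u v) := by
    intro v
    refine aux_ext (fun u => m u v) (r v) (hin v) (fun u => r u = r v) (fun u => S (r v) u v) ?_ ?_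
    · intro u hu
      exact ⟨hS1 _ _ _, by rw [hS2]; simp [hu]⟩
    · intro u w c _ _ h h'
      exact hS4 _ _ _ _ _ h h'
  choose T hT1 hT2 hT3 hT4 using hT
  choose Q hQ1 hQ2 hQ3 hQ4 using hT'
  have hE : ∀ u v, ∃ e : ℕ → ℕ, (∀ c ∈ T u v, e c ∈ Q v u) ∧
      (∀ c ∈ T u v, ∀ d ∈ T u v, e c = e d → c = d) ∧ (T u v = Q v u → ∀ c, e c = c) :=
    fun u v => aux_bij _ _ (by rw [hT2, hQ2])
  choose e he1 he2 he3 using hE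
  have hmpos : ∀ u v c, c ∈ T u v → 0 < m u v := fun u v c hc => by
    rw [← hT2]; exact Finset.card_pos.2 ⟨c, hc⟩
  have hno : ∀ u v w, 0 < m u v → 0 < m v w → False := by
    intro u v w h h'
    have h1 : m u v ≤ ∑ x, m x v :=
      Finset.single_le_sum (f := fun x => m x v) (fun _ _ => Nat.zero_le _) (Finset.mem_univ u)
    have h2 : m v w ≤ ∑ x, m v x :=
      Finset.single_le_sum (f := fun x => m v x) (fun _ _ => Nat.zero_le _) (Finset.mem_univ w)
    have := hhd v (by omega)
    omega
  refine ⟨Finset.univ.filter (fun a => a.1.2.val ∈ T a.1.1 a.2.1 ∧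
    e a.1.1 a.2.1 a.1.2.val = a.2.2.val), ?_, ?_, ?_⟩
  · rintro ⟨⟨u, c⟩, ⟨v, d⟩⟩ h
    simp only [Finset.mem_filter, Finset.mem_univ, true_and] at h ⊢
    refine ⟨?_, ?_⟩
    · by_contra hA
      have := hmpos _ _ _ h.1
      rw [hsupp _ _ hA] at this
      omega
    · intro hr'
      rw [← h.2, he3]
      rw [hT4 u v hr', hQ4 v u hr', hr']
  · rintro ⟨⟨u, c⟩, ⟨v, d⟩⟩ h ⟨⟨u', c'⟩, ⟨v', d'⟩⟩ h' hne
    simp only [Finset.mem_filter, Finset.mem_univ, true_and] at h h' ⊢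
    have p := hmpos _ _ _ h.1
    have p' := hmpos _ _ _ h'.1
    refine ⟨?_, ?_, ?_, ?_⟩
    · intro heq
      cases heq
      have := hT3 _ _ _ _ h.1 h'.1
      subst this
      have : d = d' := Fin.ext (h.2.symm.trans h'.2)
      subst this
      exact hne rfl
    · intro heq
      cases heq
      exact hno _ _ _ p' p
    · intro heq
      cases heq
      exact hno _ _ _ p p'
    · intro heq
      cases heq
      have q := he1 _ _ _ h.1
      have q' := he1 _ _ _ h'.1
      rw [h.2] at q
      rw [h'.2] at q'
      have := hQ3 _ _ _ _ q q'
      subst this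
      have : c = c' := Fin.ext (he2 _ _ _ h.1 _ h'.1 (h.2.trans h'.2.symm))
      subst this
      exact hne rfl
  · intro u v
    rw [← hT2 u v]
    refine Finset.card_bij (fun a _ => a.1.2.val) ?_ ?_ ?_
    · rintro ⟨⟨u, c⟩, ⟨v, d⟩⟩ h
      simp only [Finset.mem_filter, Finset.mem_univ, true_and] at h
      obtain ⟨h, rfl, rfl⟩ := h
      exact h.1
    · rintro ⟨⟨u, c⟩, ⟨v, d⟩⟩ h ⟨⟨u', c'⟩, ⟨v', d'⟩⟩ h' heq
      simp only [Finset.mem_filter, Finset.mem_univ, true_and] at h h' heq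
      obtain ⟨h, rfl, rfl⟩ := h
      obtain ⟨h', rfl, rfl⟩ := h'
      have : c = c' := Fin.ext heq
      subst this
      have : d = d' := Fin.ext (h.2.symm.trans h'.2)
      subst this
      rfl
    · intro c hc
      refine ⟨(⟨u, ⟨c, Finset.mem_range.1 (hT1 _ _ hc)⟩⟩,
        ⟨v, ⟨e u v c, Finset.mem_range.1 (hQ1 _ _ (he1 _ _ _ hc))⟩⟩), ?_, rfl⟩
      simp [hc]
end

section
/- Let D be a directed network in which every vertex has the same RF-chain number R ≥ 1 and, for every ordered pair (u,v), D contains either exactly R parallel arcs from u to v, all of the same positive capacity c(u,v), or no arcs from u to v. Let L be the link network of D, with one arc (u,v) of capacity c(u,v) for each connected ordered pair, and give every vertex of L one RF chain, so that a half-duplex subgraph of L is exactly a set of arcs no two of which share a vertex. Then the optimal half-duplex max-min throughput of D equals R times the optimal half-duplex max-min throughput of L; moreover an optimal unit-time half-duplex schedule for D is obtained by running R parallel copies of an optimal unit-time schedule for L. -/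
namespace S6

/-- `m` is a half-duplex subgraph of the directed network with arc-multiplicity
function `d` (number of available parallel arcs) and RF-chain numbers `r`. -/
def HDSub {V : Type} [Fintype V] (d : V → V → ℕ) (r : V → ℕ) (m : V → V → ℕ) : Prop :=
  (∀ u v, m u v ≤ d u v) ∧
  (∀ v, ((∑ u, m u v) + ∑ u, m v u) ≤ r v) ∧
  (∀ v, 0 < ∑ u, m u v → (∑ u, m v u) = 0)

/-- A unit-time half-duplex schedule: nonnegative timeslot lengths supported on
half-duplex subgraphs (encoded with multiplicities bounded by `n`), summing to `1`. -/
def IsSched {V : Type} [Fintype V] [DecidableEq V] (d : V → V → ℕ) (r : V → ℕ) (n : ℕ)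
    (t : (V → V → Fin (n + 1)) → ℝ) : Prop :=
  (∀ m, 0 ≤ t m) ∧
  (∀ m, t m ≠ 0 → HDSub d r (fun u v => (m u v : ℕ))) ∧
  (∑ m, t m = 1)

/-- Throughput of vertex `v` under schedule `t`: time-weighted capacity of the arcs
entering `v` minus that of the arcs leaving `v` (per-arc capacities `c`). -/
noncomputable def tp {V : Type} [Fintype V] [DecidableEq V] (c : V → V → ℝ) (n : ℕ)
    (t : (V → V → Fin (n + 1)) → ℝ) (v : V) : ℝ :=
  ∑ m, t m * ((∑ u, ((m u v : ℕ) : ℝ) * c u v) - ∑ u, ((m v u : ℕ) : ℝ) * c v u)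

/-- The optimal half-duplex max-min throughput: the supremum of throughputs `θ` such
that some unit-time half-duplex schedule gives every relay BS throughput at least `θ`. -/
noncomputable def optTp {V : Type} [Fintype V] [DecidableEq V] (relay : V → Prop)
    (d : V → V → ℕ) (c : V → V → ℝ) (r : V → ℕ) (n : ℕ) : ℝ :=
  sSup {θ : ℝ | ∃ t : (V → V → Fin (n + 1)) → ℝ,
    IsSched d r n t ∧ ∀ v, relay v → θ ≤ tp c n t v}

/-- The half-duplex subgraph of `D` consisting of all `R` parallel copies of every
arc of a subgraph `s` of the link network `L`. -/
def scaleR {V : Type} (R : ℕ) (s : V → V → Fin 2) : V → V → Fin (R + 1) :=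
  fun u v =>
    ⟨R * (s u v).val, by
      have h : (s u v).val ≤ 1 := Nat.lt_succ_iff.mp (s u v).isLt
      have h2 : R * (s u v).val ≤ R * 1 := Nat.mul_le_mul (le_refl R) h
      omega⟩

/-- Running `R` parallel copies of a schedule of the link network `L`. -/
noncomputable def liftSched {V : Type} [Fintype V] [DecidableEq V] (R : ℕ)
    (tL : (V → V → Fin 2) → ℝ) : (V → V → Fin (R + 1)) → ℝ :=
  fun m => ∑ s ∈ Finset.univ.filter (fun s : V → V → Fin 2 => scaleR R s = m), tL s

end S6

namespace S6

lemma sum_push {α β : Type} [Fintype α] [Fintype β] [DecidableEq β] (f : α → β)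
    (w : α → ℝ) (g : β → ℝ) :
    ∑ b, (∑ a ∈ Finset.univ.filter (fun a => f a = b), w a) * g b = ∑ a, w a * g (f a) := by
  rw [← Finset.sum_fiberwise Finset.univ f (fun a => w a * g (f a))]
  refine Finset.sum_congr rfl fun b _ => ?_
  rw [Finset.sum_mul]
  refine Finset.sum_congr rfl fun a ha => ?_
  rw [(Finset.mem_filter.mp ha).2]

lemma sum_push_one {α β : Type} [Fintype α] [Fintype β] [DecidableEq β] (f : α → β)
    (w : α → ℝ) :
    ∑ b, (∑ a ∈ Finset.univ.filter (fun a => f a = b), w a) = ∑ a, w a := by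
  simpa using sum_push f w (fun _ => 1)

lemma push_ne {α β : Type} [Fintype α] [DecidableEq β] (f : α → β)
    (w : α → ℝ) (b : β) (h : (∑ a ∈ Finset.univ.filter (fun a => f a = b), w a) ≠ 0) :
    ∃ a, f a = b ∧ w a ≠ 0 := by
  obtain ⟨a, ha, hw⟩ := Finset.exists_ne_zero_of_sum_ne_zero h
  exact ⟨a, (Finset.mem_filter.mp ha).2, hw⟩

/-- time-weighted use of the pair `(u,v)` -/
noncomputable def load {V : Type} [Fintype V] [DecidableEq V] (n : ℕ)
    (t : (V → V → Fin (n + 1)) → ℝ) (u v : V) : ℝ := ∑ m, t m * ((m u v : ℕ) : ℝ)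

lemma tp_eq_load {V : Type} [Fintype V] [DecidableEq V] (c : V → V → ℝ) (n : ℕ)
    (t : (V → V → Fin (n + 1)) → ℝ) (v : V) :
    tp c n t v = (∑ u, load n t u v * c u v) - ∑ u, load n t v u * c v u := by
  unfold tp load
  simp only [mul_sub, Finset.sum_sub_distrib, Finset.mul_sum, Finset.sum_mul, mul_assoc]
  congr 1
  · exact Finset.sum_comm
  · exact Finset.sum_comm

lemma tp_of_load {V : Type} [Fintype V] [DecidableEq V] (c : V → V → ℝ) (n k : ℕ) (a : ℝ)
    (t : (V → V → Fin (n + 1)) → ℝ) (t' : (V → V → Fin (k + 1)) → ℝ)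
    (h : ∀ u v, load n t u v = a * load k t' u v) (v : V) :
    tp c n t v = a * tp c k t' v := by
  simp only [tp_eq_load, h, mul_sub, Finset.mul_sum, mul_assoc]

lemma load_lift {V : Type} [Fintype V] [DecidableEq V] (R : ℕ)
    (tL : (V → V → Fin 2) → ℝ) (u v : V) :
    load R (liftSched R tL) u v = (R : ℝ) * load 1 tL u v := by
  unfold load liftSched
  rw [sum_push (scaleR R) tL (fun m => ((m u v : ℕ) : ℝ)), Finset.mul_sum]
  refine Finset.sum_congr rfl fun s _ => ?_
  simp only [scaleR, Nat.cast_mul]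
  ring

lemma lift_sched {V : Type} [Fintype V] [DecidableEq V] (R : ℕ)
    (Adj : V → V → Prop) [DecidableRel Adj] (tL : (V → V → Fin 2) → ℝ)
    (h : IsSched (fun u v => if Adj u v then 1 else 0) (fun _ => 1) 1 tL) :
    IsSched (fun u v => if Adj u v then R else 0) (fun _ => R) R (liftSched R tL) := by
  obtain ⟨h0, h1, h2⟩ := h
  refine ⟨fun m => Finset.sum_nonneg fun s _ => h0 s, ?_, ?_⟩
  · intro m hm
    obtain ⟨s, rfl, hs⟩ := push_ne (scaleR R) tL m hm
    obtain ⟨a, b, d⟩ := h1 s hs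
    refine ⟨fun u v => ?_, fun v => ?_, fun v hv => ?_⟩
    · have := Nat.mul_le_mul_left R (a u v)
      simp only [scaleR]
      refine this.trans ?_
      by_cases hA : Adj u v <;> simp [hA]
    · have := Nat.mul_le_mul_left R (b v)
      simpa only [scaleR, ← Finset.mul_sum, ← mul_add, mul_one] using this
    · simp only [scaleR, ← Finset.mul_sum] at hv ⊢
      rw [d v (Nat.pos_of_mul_pos_left hv), mul_zero]
  · unfold liftSched
    rw [sum_push_one, h2]

lemma decomp {V : Type} [Fintype V] [DecidableEq V] (R : ℕ) (hR : 1 ≤ R)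
    (Adj : V → V → Prop) [DecidableRel Adj] (m : V → V → ℕ)
    (h : HDSub (fun u v => if Adj u v then R else 0) (fun _ => R) m) :
    ∃ w : (V → V → Fin 2) → ℝ,
      IsSched (fun u v => if Adj u v then 1 else 0) (fun _ => 1) 1 w ∧
      ∀ u v, load 1 w u v = (m u v : ℝ) / R := by
  obtain ⟨ha, hb, hd⟩ := h
  have hR0 : (0 : ℝ) < R := by exact_mod_cast hR
  let M : Matrix V V ℝ := fun u v => (m u v : ℝ) / R
  have hM0 : ∀ u v, 0 ≤ M u v := fun u v => by positivity
  have hrow : ∀ u, ∑ v, M u v ≤ 1 := by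
    intro u
    simp only [M, ← Finset.sum_div]
    rw [div_le_one hR0]
    have : ∑ v, m u v ≤ R := le_trans (Nat.le_add_left _ _) (hb u)
    exact_mod_cast this
  have hcol : ∀ v, ∑ u, M u v ≤ 1 := by
    intro u
    simp only [M, ← Finset.sum_div]
    rw [div_le_one hR0]
    have : ∑ v, m v u ≤ R := le_trans (Nat.le_add_right _ _) (hb u)
    exact_mod_cast this
  let N : Matrix (V ⊕ V) (V ⊕ V) ℝ :=
    Matrix.fromBlocks M (Matrix.diagonal fun u => 1 - ∑ v, M u v)
      (Matrix.diagonal fun v => 1 - ∑ u, M u v) M.transpose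
  have hN : N ∈ doublyStochastic ℝ (V ⊕ V) := by
    rw [mem_doublyStochastic_iff_sum]
    refine ⟨?_, ?_, ?_⟩
    · rintro (u | u) (v | v)
      · exact hM0 u v
      · simp only [N, Matrix.fromBlocks_apply₁₂, Matrix.diagonal_apply]
        split_ifs
        · linarith [hrow u]
        · exact le_rfl
      · simp only [N, Matrix.fromBlocks_apply₂₁, Matrix.diagonal_apply]
        split_ifs
        · linarith [hcol u]
        · exact le_rfl
      · exact hM0 v u
    · rintro (u | u) <;> simp [N, Fintype.sum_sum_type, Matrix.diagonal_apply]
    · rintro (u | u) <;> simp [N, Fintype.sum_sum_type, Matrix.diagonal_apply]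
  obtain ⟨w, hw0, hw1, hw⟩ := exists_eq_sum_perm_of_mem_doublyStochastic hN
  let f : Equiv.Perm (V ⊕ V) → V → V → Fin 2 := fun σ u v =>
    if σ (Sum.inl u) = Sum.inl v ∧ 0 < m u v then 1 else 0
  have fval : ∀ σ u v, ((f σ u v : Fin 2) : ℕ) =
      if σ (Sum.inl u) = Sum.inl v ∧ 0 < m u v then 1 else 0 := by
    intro σ u v
    simp only [f]
    split_ifs <;> rfl
  refine ⟨fun s => ∑ σ ∈ Finset.univ.filter (fun σ => f σ = s), w σ, ⟨?_, ?_, ?_⟩, ?_⟩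
  · exact fun s => Finset.sum_nonneg fun σ _ => hw0 σ
  · intro s hs
    obtain ⟨σ, rfl, -⟩ := push_ne f w s hs
    simp only [HDSub, fval]
    have hin : ∀ v, ∑ u, (if σ (Sum.inl u) = Sum.inl v ∧ 0 < m u v then 1 else 0) ≤ 1 := by
      intro v
      rw [← Finset.card_filter, Finset.card_le_one]
      intro a h1 b h2
      simp only [Finset.mem_filter, Finset.mem_univ, true_and] at h1 h2
      exact Sum.inl_injective (σ.injective (h1.1.trans h2.1.symm))
    have hout : ∀ v, ∑ u, (if σ (Sum.inl v) = Sum.inl u ∧ 0 < m v u then 1 else 0) ≤ 1 := by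
      intro v
      rw [← Finset.card_filter, Finset.card_le_one]
      intro a h1 b h2
      simp only [Finset.mem_filter, Finset.mem_univ, true_and] at h1 h2
      exact Sum.inl_injective (h1.1.symm.trans h2.1)
    have hhd : ∀ v, 0 < ∑ u, (if σ (Sum.inl u) = Sum.inl v ∧ 0 < m u v then 1 else 0) →
        ∑ u, (if σ (Sum.inl v) = Sum.inl u ∧ 0 < m v u then 1 else 0) = 0 := by
      intro v hv
      obtain ⟨u, -, hu⟩ := Finset.exists_ne_zero_of_sum_ne_zero hv.ne'
      have hu' : 0 < m u v := by
        by_contra hcon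
        simp [hcon] at hu
      have h3 : ∑ x, m v x = 0 :=
        hd v (lt_of_lt_of_le hu'
          (Finset.single_le_sum (f := fun x => m x v) (fun _ _ => Nat.zero_le _)
            (Finset.mem_univ u)))
      rw [Finset.sum_eq_zero_iff] at h3
      refine Finset.sum_eq_zero fun x hx => ?_
      rw [h3 x hx]
      simp
    refine ⟨fun u v => ?_, fun v => ?_, hhd⟩
    · have := ha u v
      by_cases hA : Adj u v
      · simp only [hA, if_true]
        split_ifs <;> simp
      · simp only [hA, if_false] at this ⊢
        rw [if_neg]
        omega
    · rcases Nat.eq_zero_or_pos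
        (∑ u, (if σ (Sum.inl u) = Sum.inl v ∧ 0 < m u v then 1 else 0)) with h4 | h4
      · rw [h4, zero_add]
        exact hout v
      · rw [hhd v h4, add_zero]
        exact hin v
  · rw [sum_push_one, hw1]
  · intro u v
    unfold load
    rw [sum_push f w (fun s => ((s u v : ℕ) : ℝ))]
    simp only [fval]
    rcases Nat.eq_zero_or_pos (m u v) with h5 | h5
    · simp [h5]
    · have h6 := congrFun (congrFun hw (Sum.inl u)) (Sum.inl v)
      have h7 : N (Sum.inl u) (Sum.inl v) = (m u v : ℝ) / R := rfl
      rw [← h7, ← h6, Matrix.sum_apply]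
      refine Finset.sum_congr rfl fun σ _ => ?_
      simp [h5, Equiv.Perm.permMatrix, PEquiv.toMatrix_apply, eq_comm]

lemma lower_sched {V : Type} [Fintype V] [DecidableEq V] (R : ℕ) (hR : 1 ≤ R)
    (Adj : V → V → Prop) [DecidableRel Adj] (t : (V → V → Fin (R + 1)) → ℝ)
    (h : IsSched (fun u v => if Adj u v then R else 0) (fun _ => R) R t) :
    ∃ tL : (V → V → Fin 2) → ℝ,
      IsSched (fun u v => if Adj u v then 1 else 0) (fun _ => 1) 1 tL ∧
      ∀ u v, load R t u v = (R : ℝ) * load 1 tL u v := by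
  obtain ⟨h0, h1, h2⟩ := h
  have hR0 : (R : ℝ) ≠ 0 := by
    have : R ≠ 0 := by omega
    exact_mod_cast this
  have key : ∀ m : V → V → Fin (R + 1), ∃ w : (V → V → Fin 2) → ℝ, t m ≠ 0 →
      IsSched (fun u v => if Adj u v then 1 else 0) (fun _ => 1) 1 w ∧
      ∀ u v, load 1 w u v = ((m u v : ℕ) : ℝ) / R := by
    intro m
    by_cases hm : t m = 0
    · exact ⟨0, fun h => absurd hm h⟩
    · obtain ⟨w, hw⟩ := decomp R hR Adj _ (h1 m hm)
      exact ⟨w, fun _ => hw⟩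
  choose w hw using key
  refine ⟨fun s => ∑ m, t m * w m s, ⟨fun s => ?_, fun s hs => ?_, ?_⟩, fun u v => ?_⟩
  · refine Finset.sum_nonneg fun m _ => ?_
    by_cases hm : t m = 0
    · simp [hm]
    · exact mul_nonneg (h0 m) ((hw m hm).1.1 s)
  · obtain ⟨m, -, hm⟩ := Finset.exists_ne_zero_of_sum_ne_zero hs
    exact (hw m (left_ne_zero_of_mul hm)).1.2.1 s (right_ne_zero_of_mul hm)
  · rw [Finset.sum_comm, ← h2]
    refine Finset.sum_congr rfl fun m _ => ?_
    rw [← Finset.mul_sum]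
    by_cases hm : t m = 0
    · simp [hm]
    · rw [(hw m hm).1.2.2, mul_one]
  · have e : load 1 (fun s => ∑ m, t m * w m s) u v = ∑ m, t m * load 1 (w m) u v := by
      unfold load
      simp only [Finset.sum_mul, Finset.mul_sum, mul_assoc]
      exact Finset.sum_comm
    rw [e, Finset.mul_sum]
    unfold load
    refine Finset.sum_congr rfl fun m _ => ?_
    by_cases hm : t m = 0
    · simp [hm]
    · have := (hw m hm).2 u v
      unfold load at this
      rw [this]
      field_simp

end S6

/-- Let `D` be a directed network in which every vertex has `R ≥ 1`
RF chains and every connected ordered pair `(u,v)` (with `Adj u v`) is joined by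
exactly `R` parallel arcs of the same positive capacity `c u v`, and let `L` be its
link network (one arc per pair, one RF chain per vertex).  Then the optimal
half-duplex max-min throughput of `D` is `R` times that of `L`; moreover, `R`
parallel copies of any optimal unit-time schedule of `L` form an optimal unit-time
half-duplex schedule of `D`. -/
theorem uniform_halfduplex_mtfs
    (V : Type) [Fintype V] [DecidableEq V]
    (relay : V → Prop)
    (R : ℕ) (hR : 1 ≤ R)
    (Adj : V → V → Prop) [DecidableRel Adj] (hirr : ∀ v, ¬ Adj v v)
    (c : V → V → ℝ) (hc : ∀ u v, Adj u v → 0 < c u v) :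
    S6.optTp relay (fun u v => if Adj u v then R else 0) c (fun _ => R) R
      = (R : ℝ) * S6.optTp relay (fun u v => if Adj u v then 1 else 0) c (fun _ => 1) 1 ∧
    ∀ tL : (V → V → Fin 2) → ℝ,
      S6.IsSched (fun u v => if Adj u v then 1 else 0) (fun _ => 1) 1 tL →
      (∀ v, relay v →
        S6.optTp relay (fun u v => if Adj u v then 1 else 0) c (fun _ => 1) 1 ≤
          S6.tp c 1 tL v) →
      S6.IsSched (fun u v => if Adj u v then R else 0) (fun _ => R) R (S6.liftSched R tL) ∧
      ∀ v, relay v →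
        S6.optTp relay (fun u v => if Adj u v then R else 0) c (fun _ => R) R ≤
          S6.tp c R (S6.liftSched R tL) v := by
  have hR0 : (0 : ℝ) < R := by exact_mod_cast hR
  have main : S6.optTp relay (fun u v => if Adj u v then R else 0) c (fun _ => R) R
      = (R : ℝ) * S6.optTp relay (fun u v => if Adj u v then 1 else 0) c (fun _ => 1) 1 := by
    unfold S6.optTp
    rw [← smul_eq_mul, ← Real.sSup_smul_of_nonneg hR0.le]
    congr 1
    ext θ
    rw [Set.mem_smul_set]
    constructor
    · rintro ⟨t, ht, hθ⟩
      obtain ⟨tL, htL, hl⟩ := S6.lower_sched R hR Adj t ht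
      refine ⟨θ / R, ⟨tL, htL, fun v hv => ?_⟩, ?_⟩
      · rw [div_le_iff₀' hR0, ← S6.tp_of_load c R 1 R t tL hl v]
        exact hθ v hv
      · rw [smul_eq_mul]
        field_simp
    · rintro ⟨x, ⟨tL, htL, hx⟩, rfl⟩
      refine ⟨S6.liftSched R tL, S6.lift_sched R Adj tL htL, fun v hv => ?_⟩
      rw [S6.tp_of_load c R 1 R _ tL (S6.load_lift R tL) v, smul_eq_mul]
      exact mul_le_mul_of_nonneg_left (hx v hv) hR0.le
  refine ⟨main, fun tL htL hopt => ⟨S6.lift_sched R Adj tL htL, fun v hv => ?_⟩⟩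
  rw [main, S6.tp_of_load c R 1 R _ tL (S6.load_lift R tL) v]
  exact mul_le_mul_of_nonneg_left (hopt v hv) hR0.le
end

section
/- Let D be a directed network under the MAX-SU-SM model (for each link (u,v), exactly min(r(u), r(v)) parallel arcs of the same positive capacity) in which every relay BS has the same RF-chain number r^M ≥ 1 and each macro BS n_i has RF-chain number k_i · r^M for some k_i ∈ ℕ. Let D' be the directed network obtained from D by replacing each macro BS n_i by k_i macro BS vertices n_i^{(1)}, …, n_i^{(k_i)}, each with r^M RF chains, where each n_i^{(j)} is joined to the relay BSs exactly as n_i was (the same number of parallel arcs with the same heads and the same capacities, under the MAX-SU-SM rule). Then the optimal half-duplex max-min throughput of D equals the optimal half-duplex max-min throughput of D'. -/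
namespace S7

/-- `m` is a half-duplex subgraph of the directed network with arc-multiplicity
function `d` and RF-chain numbers `r`. -/
def HDSub {V : Type} [Fintype V] (d : V → V → ℕ) (r : V → ℕ) (m : V → V → ℕ) : Prop :=
  (∀ u v, m u v ≤ d u v) ∧
  (∀ v, ((∑ u, m u v) + ∑ u, m v u) ≤ r v) ∧
  (∀ v, 0 < ∑ u, m u v → (∑ u, m v u) = 0)

/-- A unit-time half-duplex schedule. -/
def IsSched {V : Type} [Fintype V] [DecidableEq V] (d : V → V → ℕ) (r : V → ℕ) (n : ℕ)
    (t : (V → V → Fin (n + 1)) → ℝ) : Prop :=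
  (∀ m, 0 ≤ t m) ∧
  (∀ m, t m ≠ 0 → HDSub d r (fun u v => (m u v : ℕ))) ∧
  (∑ m, t m = 1)

/-- Throughput of vertex `v` under schedule `t` (per-arc capacities `c`). -/
noncomputable def tp {V : Type} [Fintype V] [DecidableEq V] (c : V → V → ℝ) (n : ℕ)
    (t : (V → V → Fin (n + 1)) → ℝ) (v : V) : ℝ :=
  ∑ m, t m * ((∑ u, ((m u v : ℕ) : ℝ) * c u v) - ∑ u, ((m v u : ℕ) : ℝ) * c v u)

/-- The optimal half-duplex max-min throughput. -/
noncomputable def optTp {V : Type} [Fintype V] [DecidableEq V] (relay : V → Prop)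
    (d : V → V → ℕ) (c : V → V → ℝ) (r : V → ℕ) (n : ℕ) : ℝ :=
  sSup {θ : ℝ | ∃ t : (V → V → Fin (n + 1)) → ℝ,
    IsSched d r n t ∧ ∀ v, relay v → θ ≤ tp c n t v}

/-- Projection from the split network `D'` back to `D`: the copy `n_i^{(j)}` of a
macro BS projects to `n_i`; relay BSs are unchanged. -/
def proj {Vr Vm : Type} {k : Vm → ℕ} : (Vr ⊕ (Σ m : Vm, Fin (k m))) → (Vr ⊕ Vm) :=
  Sum.elim Sum.inl (fun p => Sum.inr p.1)

end S7

namespace S7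

lemma exists_sub_sum {ι : Type} [Fintype ι] [DecidableEq ι] (a : ι → ℕ) (s : ℕ) :
    s ≤ ∑ i, a i → ∃ b : ι → ℕ, (∀ i, b i ≤ a i) ∧ ∑ i, b i = s := by
  induction s with
  | zero => intro _; exact ⟨fun _ => 0, by simp, by simp⟩
  | succ s ih =>
    intro h
    obtain ⟨b, hb, hs⟩ := ih (by omega)
    obtain ⟨i, -, hi⟩ : ∃ i ∈ Finset.univ, b i < a i :=
      Finset.exists_lt_of_sum_lt (by omega)
    refine ⟨fun j => b j + if j = i then 1 else 0, ?_, ?_⟩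
    · intro j
      by_cases hj : j = i
      · subst hj; simp; omega
      · simp [hj, hb j]
    · simp [Finset.sum_add_distrib, hs]

lemma exists_distrib {ι : Type} [Fintype ι] [DecidableEq ι] (R : ℕ) (k : ℕ) :
    ∀ a : ι → ℕ, ∑ i, a i ≤ k * R →
    ∃ b : Fin k → ι → ℕ, (∀ i, ∑ j, b j i = a i) ∧ ∀ j, ∑ i, b j i ≤ R := by
  induction k with
  | zero =>
    intro a h
    refine ⟨fun _ _ => 0, ?_, fun j => j.elim0⟩
    intro i
    have : a i ≤ ∑ i, a i := Finset.single_le_sum (fun _ _ => Nat.zero_le _) (Finset.mem_univ i)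
    simp; omega
  | succ k ih =>
    intro a h
    obtain ⟨a0, h0, hs⟩ := exists_sub_sum a (min R (∑ i, a i)) (min_le_right _ _)
    have hsum : ∑ i, (a i - a0 i) + ∑ i, a0 i = ∑ i, a i := by
      rw [← Finset.sum_add_distrib]
      exact Finset.sum_congr rfl fun i _ => Nat.sub_add_cancel (h0 i)
    obtain ⟨b, hb1, hb2⟩ := ih (fun i => a i - a0 i) (by
      rw [Nat.add_mul] at h
      rcases le_total R (∑ i, a i) with h' | h'
      · rw [min_eq_left h'] at hs; omega
      · rw [min_eq_right h'] at hs
        have : ∑ i, (a i - a0 i) = 0 := by omega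
        omega)
    refine ⟨Fin.cons a0 b, ?_, ?_⟩
    · intro i
      rw [Fin.sum_univ_succ]
      simp only [Fin.cons_zero, Fin.cons_succ, hb1]
      have := h0 i; omega
    · intro j
      refine Fin.cases ?_ ?_ j
      · simp only [Fin.cons_zero, hs]; exact min_le_left _ _
      · intro j; simpa using hb2 j

lemma push {Vr A B : Type} [Fintype Vr] [Fintype A] [Fintype B] [DecidableEq Vr] [DecidableEq A]
    [DecidableEq B] (d c r) (d' c' r') (n : ℕ)
    (hd' : ∀ u v, d' u v ≤ n)
    (h : ∀ m : (Vr ⊕ A) → (Vr ⊕ A) → ℕ, HDSub d r m →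
      ∃ m' : (Vr ⊕ B) → (Vr ⊕ B) → ℕ, HDSub d' r' m' ∧ ∀ x : Vr,
        (∑ u, (m' u (Sum.inl x) : ℝ) * c' u (Sum.inl x))
          - ∑ u, (m' (Sum.inl x) u : ℝ) * c' (Sum.inl x) u
        = (∑ u, (m u (Sum.inl x) : ℝ) * c u (Sum.inl x))
          - ∑ u, (m (Sum.inl x) u : ℝ) * c (Sum.inl x) u)
    (θ : ℝ) (H : ∃ t : ((Vr ⊕ A) → (Vr ⊕ A) → Fin (n + 1)) → ℝ,
    IsSched d r n t ∧ ∀ v, (∃ x, v = Sum.inl x) → θ ≤ tp c n t v) :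
    ∃ t : ((Vr ⊕ B) → (Vr ⊕ B) → Fin (n + 1)) → ℝ,
    IsSched d' r' n t ∧ ∀ v, (∃ x, v = Sum.inl x) → θ ≤ tp c' n t v := by
  obtain ⟨t, ⟨h0, h1, h2⟩, h3⟩ := H
  have key : ∀ m : (Vr ⊕ A) → (Vr ⊕ A) → Fin (n + 1),
      ∃ m' : (Vr ⊕ B) → (Vr ⊕ B) → Fin (n + 1), t m ≠ 0 →
      (HDSub d' r' (fun u v => (m' u v : ℕ)) ∧ ∀ x : Vr,
        (∑ u, ((m' u (Sum.inl x) : ℕ) : ℝ) * c' u (Sum.inl x))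
          - ∑ u, ((m' (Sum.inl x) u : ℕ) : ℝ) * c' (Sum.inl x) u
        = (∑ u, ((m u (Sum.inl x) : ℕ) : ℝ) * c u (Sum.inl x))
          - ∑ u, ((m (Sum.inl x) u : ℕ) : ℝ) * c (Sum.inl x) u) := by
    intro m
    by_cases hm : t m = 0
    · exact ⟨fun _ _ => 0, fun h => absurd hm h⟩
    · obtain ⟨m', hm', hx⟩ := h _ (h1 m hm)
      exact ⟨fun u v => ⟨m' u v, Nat.lt_succ_of_le ((hm'.1 u v).trans (hd' u v))⟩,
        fun _ => ⟨hm', hx⟩⟩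
  choose f hf using key
  refine ⟨fun m' => ∑ m, if f m = m' then t m else 0, ⟨?_, ?_, ?_⟩, ?_⟩
  · intro m'
    exact Finset.sum_nonneg fun m _ => by split_ifs; exacts [h0 m, le_rfl]
  · intro m' hm'
    obtain ⟨m, -, hm⟩ := Finset.exists_ne_zero_of_sum_ne_zero hm'
    split_ifs at hm with he
    · rw [← he]; exact (hf m hm).1
    · exact absurd rfl hm
  · rw [Finset.sum_comm]; simpa using h2
  · rintro v ⟨x, rfl⟩
    refine (h3 _ ⟨x, rfl⟩).trans (le_of_eq ?_)
    unfold tp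
    simp only [Finset.sum_mul]
    rw [Finset.sum_comm]
    refine Finset.sum_congr rfl fun m _ => ?_
    simp only [ite_mul, zero_mul, Finset.sum_ite_eq, Finset.mem_univ, if_true]
    by_cases hm : t m = 0
    · simp [hm]
    · rw [(hf m hm).2 x]

end S7

/-- Let `D` be a directed network under the MAX-SU-SM model (arc
multiplicities `d`, per-arc capacities `c`) whose relay BSs (`Sum.inl`) all have
`r^M ≥ 1` RF chains and whose macro BSs (`Sum.inr m`) have `k m · r^M` RF chains
(`k m ≥ 1`), macro BSs having no incoming arcs.  Let `D'` be obtained by splitting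
each macro BS `m` into `k m` copies with `r^M` RF chains each, each copy joined to
the relay BSs exactly as `m` was.  Then the optimal half-duplex max-min throughputs
of `D` and `D'` are equal. -/
theorem split_macro_bs_preserves_optimum
    (Vr Vm : Type) [Fintype Vr] [Fintype Vm] [DecidableEq Vr] [DecidableEq Vm]
    (rM : ℕ) (hrM : 1 ≤ rM) (k : Vm → ℕ) (hk : ∀ m, 1 ≤ k m)
    (d : (Vr ⊕ Vm) → (Vr ⊕ Vm) → ℕ) (c : (Vr ⊕ Vm) → (Vr ⊕ Vm) → ℝ)
    (hloop : ∀ v, d v v = 0)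
    (hmax : ∀ u v, d u v ≠ 0 →
      d u v = min (Sum.elim (fun _ => rM) (fun m => k m * rM) u)
                  (Sum.elim (fun _ => rM) (fun m => k m * rM) v))
    (hpos : ∀ u v, d u v ≠ 0 → 0 < c u v)
    (hmacIn : ∀ u (m : Vm), d u (Sum.inr m) = 0) :
    S7.optTp (fun a => ∃ x, a = Sum.inl x) d c
        (Sum.elim (fun _ => rM) (fun m => k m * rM)) rM
      = S7.optTp (V := Vr ⊕ (Σ m : Vm, Fin (k m)))
          (fun a => ∃ x, a = Sum.inl x)
          (fun a b => d (S7.proj a) (S7.proj b))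
          (fun a b => c (S7.proj a) (S7.proj b))
          (fun _ => rM) rM := by
  classical
  have hdle : ∀ u v, d u v ≤ rM := by
    intro u v
    by_cases h : d u v = 0
    · omega
    · rcases v with y | a
      · rw [hmax _ _ h]; exact min_le_right _ _
      · exact absurd (hmacIn u a) h
  have hdeq : ∀ (a : Vm) (y : Vr), d (Sum.inr a) (Sum.inl y) ≠ 0 →
      d (Sum.inr a) (Sum.inl y) = rM := by
    intro a y h
    rw [hmax _ _ h]
    simp only [Sum.elim_inl, Sum.elim_inr]
    exact min_eq_right (Nat.le_mul_of_pos_left _ (hk a))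
  unfold S7.optTp
  congr 1
  ext θ
  constructor
  · refine S7.push _ _ _ _ _ _ rM (fun u v => hdle _ _) ?_ θ
    rintro m ⟨hm1, hm2, hm3⟩
    have hmz : ∀ u a, m u (Sum.inr a) = 0 := fun u a =>
      Nat.le_zero.1 ((hm1 u _).trans_eq (hmacIn u a))
    have hb : ∀ a : Vm, ∃ b : Fin (k a) → Vr → ℕ,
        (∀ i, ∑ j, b j i = m (Sum.inr a) (Sum.inl i)) ∧ ∀ j, ∑ i, b j i ≤ rM := by
      intro a
      apply S7.exists_distrib
      have := hm2 (Sum.inr a)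
      simp only [Fintype.sum_sum_type, hmz, Sum.elim_inr, Finset.sum_const_zero] at this
      omega
    choose b hb1 hb2 using hb
    have hble : ∀ a j y, b a j y ≤ m (Sum.inr a) (Sum.inl y) := fun a j y => by
      rw [← hb1]
      exact Finset.single_le_sum (f := fun j => b a j y) (fun _ _ => Nat.zero_le _)
        (Finset.mem_univ j)
    refine ⟨fun u v => Sum.elim
      (fun y => Sum.elim (fun x => m (Sum.inl x) (Sum.inl y)) (fun p => b p.1 p.2 y) u)
      (fun _ => 0) v, ⟨?_, ?_, ?_⟩, ?_⟩
    · rintro (x | ⟨a, j⟩) (y | ⟨a', j'⟩)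
      · exact hm1 _ _
      · simp
      · exact (hble a j y).trans (hm1 _ _)
      · simp
    · rintro (x | ⟨a, j⟩)
      · have := hm2 (Sum.inl x)
        simpa [Fintype.sum_sum_type, Fintype.sum_sigma, hmz, hb1] using this
      · simpa [Fintype.sum_sum_type] using hb2 a j
    · rintro (x | ⟨a, j⟩)
      · have := hm3 (Sum.inl x)
        simpa only [Fintype.sum_sum_type, Fintype.sum_sigma, hmz, hb1, Sum.elim_inl, Sum.elim_inr,
          Finset.sum_const_zero] using this
      · simp
    · intro x
      simp only [Fintype.sum_sum_type, Fintype.sum_sigma, hmz, Sum.elim_inl, Sum.elim_inr,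
          Finset.sum_const_zero, S7.proj, Nat.cast_zero, zero_mul, ← Finset.sum_mul,
          ← Nat.cast_sum, hb1]
  · refine S7.push _ _ _ _ _ _ rM (fun u v => hdle _ _) ?_ θ
    rintro m ⟨hm1, hm2, hm3⟩
    have hmz : ∀ u a, m u (Sum.inr a) = 0 := fun u a =>
      Nat.le_zero.1 ((hm1 u _).trans_eq (hmacIn _ _))
    refine ⟨fun u v => Sum.elim
      (fun y => Sum.elim (fun x => m (Sum.inl x) (Sum.inl y))
        (fun a => ∑ j, m (Sum.inr ⟨a, j⟩) (Sum.inl y)) u)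
      (fun _ => 0) v, ⟨?_, ?_, ?_⟩, ?_⟩
    · rintro (x | a) (y | a')
      · exact hm1 _ _
      · simp
      · simp only [Sum.elim_inl, Sum.elim_inr]
        by_cases h : d (Sum.inr a) (Sum.inl y) = 0
        · rw [h]
          refine le_of_eq (Finset.sum_eq_zero fun j _ => ?_)
          exact Nat.le_zero.1 ((hm1 _ _).trans_eq h)
        · rw [hdeq a y h]
          have h2 := hm2 (Sum.inl y)
          simp only [Fintype.sum_sum_type, Fintype.sum_sigma] at h2
          have h3 := Finset.single_le_sum (f := fun a => ∑ j, m (Sum.inr ⟨a, j⟩) (Sum.inl y))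
            (fun _ _ => Nat.zero_le _) (Finset.mem_univ a)
          omega
      · simp
    · rintro (x | a)
      · have := hm2 (Sum.inl x)
        simpa [Fintype.sum_sum_type, Fintype.sum_sigma, hmz] using this
      · simp only [Fintype.sum_sum_type, Sum.elim_inl, Sum.elim_inr, Finset.sum_const_zero,
          zero_add, add_zero]
        rw [Finset.sum_comm]
        calc _ ≤ ∑ j : Fin (k a), rM := Finset.sum_le_sum fun j _ => by
              have := hm2 (Sum.inr ⟨a, j⟩)
              simp only [Fintype.sum_sum_type, hmz, Finset.sum_const_zero] at this
              omega
          _ = k a * rM := by simp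
    · rintro (x | a)
      · have := hm3 (Sum.inl x)
        simpa only [Fintype.sum_sum_type, Fintype.sum_sigma, hmz, Sum.elim_inl, Sum.elim_inr,
          Finset.sum_const_zero] using this
      · simp
    · intro x
      simp only [Fintype.sum_sum_type, Fintype.sum_sigma, hmz, Sum.elim_inl, Sum.elim_inr,
          Finset.sum_const_zero, S7.proj, Nat.cast_zero, zero_mul, ← Finset.sum_mul,
          Nat.cast_sum]
end

section
/- Let G be a finite simple graph with positive edge weights w and a number b(v) ∈ ℕ, b(v) ≥ 1, for each vertex v. Construct the graph G'' as follows: replace each vertex v by b(v) copies v^{(1)}, …, v^{(b(v))}; replace each edge {u,v} of G by the b(u)·b(v) edges {u^{(i)}, v^{(j)}} for all i, j, each with weight w({u,v}); then take two disjoint copies of the resulting graph and join each pair of corresponding vertices by an edge of weight 0. Then G'' has a perfect matching, and the maximum weight of a perfect matching of G'' equals 2·W, where W is the maximum weight of a b-matching of G, i.e., the maximum of Σ_{e ∈ E(G)} f(e)·w(e) over functions f : E(G) → ℕ with Σ_{e incident to v} f(e) ≤ b(v) for every vertex v. -/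
namespace S12

/-- Vertices of Tutte's gadget graph `G''`: two copies (indexed by `Bool`) of the
graph obtained from `G` by splitting each vertex `v` into `b v` copies. -/
abbrev W (V : Type) (b : V → ℕ) := Bool × Σ v : V, Fin (b v)

/-- Adjacency of `G''`: within a copy, `u⁽ⁱ⁾ ~ v⁽ʲ⁾` whenever `u ~ v` in `G`;
across the two copies, each pair of corresponding vertices is joined. -/
def adj'' {V : Type} (G : SimpleGraph V) {b : V → ℕ} (a c : W V b) : Prop :=
  (a.1 = c.1 ∧ G.Adj a.2.1 c.2.1) ∨ (a.1 ≠ c.1 ∧ a.2 = c.2)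

/-- Edge weights of `G''`: the weight `w u v` on split edges, `0` on the edges
joining the two copies. -/
noncomputable def wt'' {V : Type} (w : V → V → ℝ) {b : V → ℕ} (a c : W V b) : ℝ :=
  if a.1 = c.1 then w a.2.1 c.2.1 else 0

/-- `σ` is a perfect matching of `G''`, encoded as a fixed-point-free involution
matching adjacent vertices. -/
def isPM {V : Type} (G : SimpleGraph V) {b : V → ℕ} (σ : W V b → W V b) : Prop :=
  (∀ x, σ (σ x) = x) ∧ (∀ x, σ x ≠ x) ∧ (∀ x, adj'' G x (σ x))

/-- The weight of the perfect matching `σ` (each matched pair is counted twice in the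
sum, hence the division by `2`). -/
noncomputable def pmwt {V : Type} [Fintype V] (w : V → V → ℝ) {b : V → ℕ}
    [∀ v, Fintype (Fin (b v))] (σ : W V b → W V b) : ℝ :=
  (∑ x : W V b, wt'' w x (σ x)) / 2

/-- `f` is a `b`-matching of `G`: symmetric edge multiplicities supported on edges of
`G`, with `Σ_u f v u ≤ b v` at every vertex `v`. -/
def isBM {V : Type} [Fintype V] (G : SimpleGraph V) (b : V → ℕ) (f : V → V → ℕ) : Prop :=
  (∀ u v, f u v = f v u) ∧ (∀ u v, ¬ G.Adj u v → f u v = 0) ∧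
  (∀ v, ∑ u, f v u ≤ b v)

/-- The weight of the `b`-matching `f`. -/
noncomputable def bmwt {V : Type} [Fintype V] (w : V → V → ℝ) (f : V → V → ℕ) : ℝ :=
  (∑ u, ∑ v, (f u v : ℝ) * w u v) / 2

end S12

namespace S12

lemma lower {V : Type} [Fintype V] [DecidableEq V] (G : SimpleGraph V)
    (w : V → V → ℝ) (b : V → ℕ) (f : V → V → ℕ) (hf : isBM G b f) :
    ∃ σ : W V b → W V b, isPM G σ ∧ pmwt w σ = 2 * bmwt w f := by
  classical
  obtain ⟨hs, h0, hc⟩ := hf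
  have he : ∀ v, Nonempty ((Σ u, Fin (f v u)) ↪ Fin (b v)) := by
    intro v
    apply Function.Embedding.nonempty_of_card_le
    simpa using hc v
  let e := fun v => Classical.choice (he v)
  let D := Σ v, Σ u, Fin (f v u)
  let E : D → Σ v, Fin (b v) := fun d => ⟨d.1, e d.1 d.2⟩
  have hE : Function.Injective E := by
    rintro ⟨v, p⟩ ⟨v', p'⟩ h
    simp only [E, Sigma.mk.injEq] at h
    obtain ⟨rfl, h⟩ := h
    have := (e v).injective (eq_of_heq h)
    rw [this]
  let s : D → D := fun d => ⟨d.2.1, d.1, Fin.cast (hs _ _) d.2.2⟩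
  have hss : ∀ d, s (s d) = d := by
    rintro ⟨v, u, k⟩
    rfl
  have hadj : ∀ d : D, G.Adj d.1 d.2.1 := by
    rintro ⟨v, u, k⟩
    by_contra h
    have := h0 v u h
    have := k.2
    omega
  let σ : W V b → W V b := fun x =>
    if h : ∃ d, E d = x.2 then (x.1, E (s h.choose)) else (!x.1, x.2)
  have hσ1 : ∀ c d, σ (c, E d) = (c, E (s d)) := by
    intro c d
    have h : ∃ d', E d' = E d := ⟨d, rfl⟩
    have h2 : h.choose = d := hE h.choose_spec
    simp only [σ]
    rw [dif_pos h, h2]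
  have hσ2 : ∀ c x, (¬ ∃ d, E d = x) → σ (c, x) = (!c, x) := by
    intro c x h
    simp only [σ]
    rw [dif_neg h]
  refine ⟨σ, ⟨?_, ?_, ?_⟩, ?_⟩
  · rintro ⟨c, x⟩
    by_cases h : ∃ d, E d = x
    · obtain ⟨d, rfl⟩ := h
      rw [hσ1, hσ1, hss]
    · rw [hσ2 _ _ h, hσ2 _ _ h, Bool.not_not]
  · rintro ⟨c, x⟩
    by_cases h : ∃ d, E d = x
    · obtain ⟨d, rfl⟩ := h
      rw [hσ1]
      intro h
      have h1 : (s d).1 = d.1 := congrArg (fun y : W V b => y.2.1) h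
      have := hadj d
      have h2 : d.2.1 = d.1 := h1
      rw [h2] at this
      exact G.loopless.irrefl _ this
    · rw [hσ2 _ _ h]
      simp
  · rintro ⟨c, x⟩
    by_cases h : ∃ d, E d = x
    · obtain ⟨d, rfl⟩ := h
      rw [hσ1]
      exact Or.inl ⟨rfl, hadj d⟩
    · rw [hσ2 _ _ h]
      exact Or.inr ⟨by simp, rfl⟩
  · have key : ∀ c, ∑ x : (Σ v, Fin (b v)), wt'' w (c, x) (σ (c, x))
        = ∑ u, ∑ v, (f u v : ℝ) * w u v := by
      intro c
      have h1 : ∑ d : D, wt'' w (c, E d) (σ (c, E d))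
          = ∑ x : (Σ v, Fin (b v)), wt'' w (c, x) (σ (c, x)) := by
        apply Fintype.sum_of_injective E hE
        · intro x hx
          rw [hσ2 _ _ hx]
          simp [wt'']
        · intro d
          rfl
      rw [← h1]
      have h2 : ∀ d : D, wt'' w (c, E d) (σ (c, E d)) = w d.1 d.2.1 := by
        intro d
        rw [hσ1]
        simp [wt'', E, s]
      simp only [h2]
      simp only [D, Fintype.sum_sigma]
      simp
    unfold pmwt bmwt
    rw [Fintype.sum_prod_type]
    simp only [key]
    simp
    ring

lemma upper {V : Type} [Fintype V] [DecidableEq V] (G : SimpleGraph V)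
    (w : V → V → ℝ) (b : V → ℕ) (σ : W V b → W V b) (hσ : isPM G σ) :
    ∃ f g : V → V → ℕ, isBM G b f ∧ isBM G b g ∧ pmwt w σ = bmwt w f + bmwt w g := by
  classical
  obtain ⟨hi, hn, ha⟩ := hσ
  let S : Bool → V → V → Finset (Σ v, Fin (b v)) := fun c u v =>
    Finset.univ.filter fun x => x.1 = u ∧ (σ (c, x)).1 = c ∧ (σ (c, x)).2.1 = v
  let F : Bool → V → V → ℕ := fun c u v => (S c u v).card
  have mS : ∀ c u v x, x ∈ S c u v ↔ x.1 = u ∧ (σ (c, x)).1 = c ∧ (σ (c, x)).2.1 = v := by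
    intro c u v x
    simp [S]
  have hle : ∀ c u v, F c u v ≤ F c v u := by
    intro c u v
    have hx0 : ∀ x ∈ S c u v, (c, (σ (c, x)).2) = σ (c, x) := by
      intro x hx
      rw [mS] at hx
      exact Prod.ext hx.2.1.symm rfl
    apply Finset.card_le_card_of_injOn (fun x => (σ (c, x)).2)
    · intro x hx
      have h3 := hx0 x hx
      have hx' := (mS c u v x).1 hx
      refine (mS c v u _).2 ⟨hx'.2.2, ?_, ?_⟩
      · simp only [h3, hi]
      · simp only [h3, hi]
        exact hx'.1
    · intro x hx y hy hxy
      simp only at hxy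
      have h3 := hx0 x hx
      have h4 := hx0 y hy
      rw [hxy, h4] at h3
      have := congrArg σ h3
      rw [hi, hi] at this
      exact (congrArg Prod.snd this).symm
  have hBM : ∀ c, isBM G b (F c) := by
    intro c
    refine ⟨fun u v => le_antisymm (hle c u v) (hle c v u), ?_, ?_⟩
    · intro u v h
      rw [Finset.card_eq_zero, Finset.eq_empty_iff_forall_notMem]
      intro x hx
      obtain ⟨h1, h2, h3⟩ := (mS c u v x).1 hx
      rcases ha (c, x) with h4 | h4
      · apply h
        rw [← h1, ← h3]
        exact h4.2
      · exact h4.1 h2.symm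
    · intro v
      have h1 : ∑ u, F c v u = (Finset.univ.biUnion (S c v)).card := by
        rw [Finset.card_biUnion]
        intro u _ u' _ huu
        rw [Function.onFun, Finset.disjoint_left]
        intro x hx hx'
        exact huu (((mS _ _ _ _).1 hx).2.2.symm.trans ((mS _ _ _ _).1 hx').2.2)
      rw [h1]
      have h2 : (Finset.univ.biUnion (S c v)) ⊆
          (Finset.univ : Finset (Fin (b v))).image (fun i => (⟨v, i⟩ : Σ v, Fin (b v))) := by
        intro x hx
        simp only [Finset.mem_biUnion, Finset.mem_univ, true_and] at hx
        obtain ⟨u, hx⟩ := hx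
        obtain ⟨h, -⟩ := (mS _ _ _ _).1 hx
        obtain ⟨v', i⟩ := x
        simp only at h
        subst h
        simp
      refine (Finset.card_le_card h2).trans (Finset.card_image_le.trans ?_)
      simp
  have key : ∀ c, ∑ x : (Σ v, Fin (b v)), wt'' w (c, x) (σ (c, x))
        = ∑ u, ∑ v, (F c u v : ℝ) * w u v := by
    intro c
    have h1 : ∀ u v, (F c u v : ℝ) * w u v = ∑ x : (Σ v, Fin (b v)),
        if x.1 = u ∧ (σ (c, x)).1 = c ∧ (σ (c, x)).2.1 = v then w u v else 0 := by
      intro u v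
      rw [← Finset.sum_filter, Finset.sum_const, nsmul_eq_mul]
    simp only [h1]
    have h2 : ∀ u, ∑ v, (∑ x : (Σ v, Fin (b v)),
        if x.1 = u ∧ (σ (c, x)).1 = c ∧ (σ (c, x)).2.1 = v then w u v else 0) =
        ∑ x : (Σ v, Fin (b v)), ∑ v,
        if x.1 = u ∧ (σ (c, x)).1 = c ∧ (σ (c, x)).2.1 = v then w u v else 0 :=
      fun u => Finset.sum_comm
    simp only [h2]
    rw [Finset.sum_comm]
    refine Finset.sum_congr rfl fun x _ => ?_
    simp only [ite_and, Finset.sum_ite_irrel, Finset.sum_const_zero, Finset.sum_ite_eq,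
      Finset.mem_univ, if_true]
    simp [wt'', eq_comm]
  refine ⟨F true, F false, hBM _, hBM _, ?_⟩
  unfold pmwt bmwt
  rw [Fintype.sum_prod_type]
  simp only [key]
  simp
  ring

end S12

/-- For a finite simple graph `G` with positive symmetric edge weights
`w` and vertex capacities `b v ≥ 1`, the Tutte gadget graph `G''` has a perfect
matching, and the maximum weight of a perfect matching of `G''` equals `2·W`, where
`W` is the maximum weight of a `b`-matching of `G`. -/
theorem tutte_reduction_b_matching
    (V : Type) [Fintype V] [DecidableEq V]
    (G : SimpleGraph V)
    (w : V → V → ℝ) (hwsym : ∀ u v, w u v = w v u)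
    (hwpos : ∀ u v, G.Adj u v → 0 < w u v)
    (b : V → ℕ) (hb : ∀ v, 1 ≤ b v) :
    (∃ σ : S12.W V b → S12.W V b, S12.isPM G σ) ∧
    ∃ Wmax : ℝ,
      (∃ f, S12.isBM G b f ∧ S12.bmwt w f = Wmax) ∧
      (∀ f, S12.isBM G b f → S12.bmwt w f ≤ Wmax) ∧
      (∃ σ : S12.W V b → S12.W V b, S12.isPM G σ ∧ S12.pmwt w σ = 2 * Wmax) ∧
      (∀ σ : S12.W V b → S12.W V b, S12.isPM G σ → S12.pmwt w σ ≤ 2 * Wmax) := by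
  classical
  have hfin : {f | S12.isBM G b f}.Finite := by
    refine (Set.finite_Icc (0 : V → V → ℕ) (fun u _ => b u)).subset ?_
    rintro f ⟨-, -, h⟩
    refine ⟨fun u v => Nat.zero_le _, fun u v => ?_⟩
    exact (Finset.single_le_sum (f := fun v => f u v) (fun _ _ => Nat.zero_le _)
      (Finset.mem_univ v)).trans (h u)
  have hne : {f | S12.isBM G b f}.Nonempty :=
    ⟨fun _ _ => 0, fun _ _ => rfl, fun _ _ _ => rfl, fun v => by simp⟩
  obtain ⟨f, hf, hmax⟩ := Set.exists_max_image _ (S12.bmwt w) hfin hne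
  obtain ⟨σ, hσ, hw⟩ := S12.lower G w b f hf
  refine ⟨⟨σ, hσ⟩, S12.bmwt w f, ⟨f, hf, rfl⟩, hmax, ⟨σ, hσ, hw⟩, ?_⟩
  intro τ hτ
  obtain ⟨g, h, hg, hh, he⟩ := S12.upper G w b τ hτ
  have := hmax g hg
  have := hmax h hh
  linarith
end

section
/- Let G be a finite loopless multigraph with positive edge weights w and a number b(v) ∈ ℕ, 1 ≤ b(v) ≤ deg(v), for each vertex v. Construct the graph G'' as follows: for each vertex v create b(v) outer vertices v^{(1)}, …, v^{(b(v))}; for each edge e = {u,v} of G create two inner vertices e_u, e_v and the edges {u^{(i)}, e_u} for all i, the edge {e_u, e_v}, and the edges {e_v, v^{(j)}} for all j, each of weight w(e); then take two disjoint copies of the resulting graph and join each pair of corresponding outer vertices by an edge of weight 0. Then G'' has a perfect matching, and the maximum weight of a perfect matching of G'' equals 2·(Σ_{e ∈ E(G)} w(e) + W), where W is the maximum weight of a simple b-matching of G, i.e., the maximum of Σ_{e ∈ S} w(e) over sets S ⊆ E(G) of edges such that every vertex v is incident to at most b(v) edges of S. -/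
namespace S13

/-- One copy of Schrijver's gadget graph: outer vertices `v⁽ⁱ⁾` (`Sum.inl ⟨v, i⟩`,
`i < b v`) and inner vertices `e_u = Sum.inr (e, false)`, `e_v = Sum.inr (e, true)`
for each edge `e = {u, v}` (with `u = fst e`, `v = snd e`). -/
abbrev Core (V E : Type) (b : V → ℕ) := (Σ v : V, Fin (b v)) ⊕ (E × Bool)

/-- Vertices of the full gadget graph `G''`: two copies of the core graph. -/
abbrev W (V E : Type) (b : V → ℕ) := Bool × Core V E b

/-- Adjacency within one copy: `{u⁽ⁱ⁾, e_u}` for `fst e = u`, `{e_u, e_v}`, and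
`{e_v, v⁽ʲ⁾}` for `snd e = v`. -/
def adj0 {V E : Type} (fst snd : E → V) {b : V → ℕ} :
    Core V E b → Core V E b → Prop :=
  fun x y =>
    match x, y with
    | Sum.inl a, Sum.inr (e, s) => (s = false ∧ fst e = a.1) ∨ (s = true ∧ snd e = a.1)
    | Sum.inr (e, s), Sum.inl a => (s = false ∧ fst e = a.1) ∨ (s = true ∧ snd e = a.1)
    | Sum.inr (e, s), Sum.inr (e', s') => e = e' ∧ s ≠ s'
    | _, _ => False

/-- Weights within one copy: all gadget edges coming from edge `e` get weight `w e`. -/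
def wt0 {V E : Type} (w : E → ℝ) {b : V → ℕ} : Core V E b → Core V E b → ℝ :=
  fun x y =>
    match x, y with
    | Sum.inl _, Sum.inr (e, _) => w e
    | Sum.inr (e, _), _ => w e
    | _, _ => 0

/-- Adjacency of `G''`: the core adjacency within each copy, plus a zero-weight edge
between each pair of corresponding outer vertices of the two copies. -/
def adj'' {V E : Type} (fst snd : E → V) {b : V → ℕ} (a c : W V E b) : Prop :=
  (a.1 = c.1 ∧ adj0 fst snd a.2 c.2) ∨
  (a.1 ≠ c.1 ∧ ∃ x : Σ v : V, Fin (b v), a.2 = Sum.inl x ∧ c.2 = Sum.inl x)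

/-- Edge weights of `G''`. -/
noncomputable def wt'' {V E : Type} (w : E → ℝ) {b : V → ℕ} (a c : W V E b) : ℝ :=
  if a.1 = c.1 then wt0 w a.2 c.2 else 0

/-- `σ` is a perfect matching of `G''`, encoded as a fixed-point-free involution
matching adjacent vertices. -/
def isPM {V E : Type} (fst snd : E → V) {b : V → ℕ} (σ : W V E b → W V E b) : Prop :=
  (∀ x, σ (σ x) = x) ∧ (∀ x, σ x ≠ x) ∧ (∀ x, adj'' fst snd x (σ x))

/-- The weight of the perfect matching `σ` (each matched pair is counted twice, hence
the division by `2`). -/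
noncomputable def pmwt {V E : Type} [Fintype V] [Fintype E] (w : E → ℝ) {b : V → ℕ}
    (σ : W V E b → W V E b) : ℝ :=
  (∑ x : W V E b, wt'' w x (σ x)) / 2

/-- `S` is a simple `b`-matching of the multigraph `G`: a set of edges such that every
vertex `v` is incident to at most `b v` edges of `S`. -/
def isSBM {V E : Type} [Fintype E] [DecidableEq V] (fst snd : E → V) (b : V → ℕ)
    (S : Finset E) : Prop :=
  ∀ v, (S.filter (fun e => fst e = v ∨ snd e = v)).card ≤ b v

end S13

namespace S13

section helpers
variable {V E : Type} [Fintype V] [DecidableEq V] [Fintype E] [DecidableEq E]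

/-- Endpoint. -/
def en (fst snd : E → V) (p : E × Bool) : V := if p.2 then snd p.1 else fst p.1

theorem inner_cases {fst snd : E → V} {b : V → ℕ} {σ : W V E b → W V E b}
    (h : isPM fst snd σ) (c : Bool) (e : E) (s : Bool) :
    (∃ a : Σ v : V, Fin (b v), σ (c, Sum.inr (e, s)) = (c, Sum.inl a) ∧ en fst snd (e, s) = a.1) ∨
      σ (c, Sum.inr (e, s)) = (c, Sum.inr (e, !s)) := by
  have h3 := h.2.2 (c, Sum.inr (e, s))
  rcases hx : σ (c, Sum.inr (e, s)) with ⟨c', a | ⟨e', s'⟩⟩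
  · left
    rw [hx] at h3
    rcases h3 with ⟨hc, h3⟩ | ⟨_, x, hx, _⟩
    · simp only at hc
      subst hc
      refine ⟨a, rfl, ?_⟩
      simp only [adj0] at h3
      rcases h3 with ⟨rfl, h⟩ | ⟨rfl, h⟩ <;> simpa [en] using h
    · simp at hx
  · right
    rw [hx] at h3
    rcases h3 with ⟨hc, h3⟩ | ⟨_, x, hx, _⟩
    · simp only at hc
      subst hc
      simp only [adj0] at h3
      obtain ⟨rfl, h⟩ := h3
      cases s <;> cases s' <;> simp_all
    · simp at hx

open Classical in
/-- Edges selected by a perfect matching in copy `c`. -/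
noncomputable def sel {b : V → ℕ} (σ : W V E b → W V E b) (c : Bool) : Finset E :=
  Finset.univ.filter (fun e => ∃ a, σ (c, Sum.inr (e, false)) = (c, Sum.inl a))

theorem mem_sel {fst snd : E → V} {b : V → ℕ} {σ : W V E b → W V E b}
    (h : isPM fst snd σ) (c : Bool) (e : E) (s : Bool) :
    e ∈ sel σ c ↔ ∃ a, σ (c, Sum.inr (e, s)) = (c, Sum.inl a) := by
  simp only [sel, Finset.mem_filter, Finset.mem_univ, true_and]
  cases s
  · rfl
  · have h1 := h.1 (c, Sum.inr (e, false))
    have h2 := h.1 (c, Sum.inr (e, true))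
    rcases inner_cases h c e false with ⟨a, ha, -⟩ | ha <;>
    rcases inner_cases h c e true with ⟨a', ha', -⟩ | ha' <;> simp_all

theorem sel_isSBM {fst snd : E → V} {b : V → ℕ} {σ : W V E b → W V E b}
    (hb : ∀ v, 1 ≤ b v) (h : isPM fst snd σ) (c : Bool) : isSBM fst snd b (sel σ c) := by
  classical
  intro v
  have key : ∀ e ∈ (sel σ c).filter (fun e => fst e = v ∨ snd e = v),
      ∃ i : Fin (b v), ∃ s, σ (c, Sum.inr (e, s)) = (c, Sum.inl ⟨v, i⟩) := by
    intro e he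
    rw [Finset.mem_filter] at he
    obtain ⟨s, hs⟩ : ∃ s, en fst snd (e, s) = v := by
      rcases he.2 with h | h
      · exact ⟨false, by simpa [en] using h⟩
      · exact ⟨true, by simpa [en] using h⟩
    obtain ⟨a, ha⟩ := (mem_sel h c e s).1 he.1
    rcases inner_cases h c e s with ⟨⟨v', i⟩, ha', hv⟩ | ha'
    · simp only at hv
      have : v = v' := hs.symm.trans hv
      subst this
      exact ⟨i, s, ha'⟩
    · rw [ha] at ha'
      simp at ha'
  have : Nonempty (Fin (b v)) := ⟨⟨0, hb v⟩⟩
  choose! f hf using key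
  have := Finset.card_le_card_of_injOn (t := (Finset.univ : Finset (Fin (b v)))) f (by simp) (by
    intro e he e' he' hee
    obtain ⟨s, hs⟩ := hf e he
    obtain ⟨s', hs'⟩ := hf e' he'
    rw [← hee, ← hs] at hs'
    have := congrArg σ hs'
    rw [h.1, h.1] at this
    simp at this
    exact this.1.symm)
  simpa using this

theorem pmwt_eq {fst snd : E → V} (w : E → ℝ) {b : V → ℕ} {σ : W V E b → W V E b}
    (h : isPM fst snd σ) :
    pmwt w σ = ∑ c : Bool, ((∑ e, w e) + ∑ e ∈ sel σ c, w e) := by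
  classical
  have hin : ∀ c (p : E × Bool), wt'' w (c, Sum.inr p) (σ (c, Sum.inr p)) = w p.1 := by
    rintro c ⟨e, s⟩
    rcases inner_cases h c e s with ⟨a, ha, -⟩ | ha <;> simp [ha, wt'', wt0]
  have hout : ∀ c (a : Σ v : V, Fin (b v)), wt'' w (c, Sum.inl a) (σ (c, Sum.inl a)) =
      ∑ p : E × Bool, if σ (c, Sum.inr p) = (c, Sum.inl a) then w p.1 else 0 := by
    intro c a
    have hiff : ∀ p : E × Bool, σ (c, Sum.inr p) = (c, Sum.inl a) ↔
        σ (c, Sum.inl a) = (c, Sum.inr p) := by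
      intro p
      constructor <;> intro hh <;> rw [← hh, h.1]
    simp only [hiff]
    rcases hx : σ (c, Sum.inl a) with ⟨c', a' | p⟩
    · simp [wt'', wt0]
    · by_cases hc : c = c'
      · subst hc
        simp [wt'', wt0]
      · have hc' : ¬ c' = c := fun hh => hc hh.symm
        simp [wt'', hc, hc']
  have hsum : ∀ c, ∑ a : Σ v : V, Fin (b v), wt'' w (c, Sum.inl a) (σ (c, Sum.inl a)) =
      2 * ∑ e ∈ sel σ c, w e := by
    intro c
    simp only [hout]
    rw [Finset.sum_comm]
    have : ∀ p : E × Bool, (∑ a : Σ v : V, Fin (b v),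
        if σ (c, Sum.inr p) = (c, Sum.inl a) then w p.1 else 0) =
        if p.1 ∈ sel σ c then w p.1 else 0 := by
      rintro ⟨e, s⟩
      rcases inner_cases h c e s with ⟨a, ha, -⟩ | ha
      · have hm : e ∈ sel σ c := (mem_sel h c e s).2 ⟨a, ha⟩
        simp [ha, hm]
      · have hm : e ∉ sel σ c := by
          rw [mem_sel h c e s, ha]
          simp
        simp [ha, hm]
    simp only [this]
    rw [Fintype.sum_prod_type]
    simp [Finset.sum_ite_mem, ← Finset.mul_sum, ← two_mul]
  unfold pmwt
  rw [Fintype.sum_prod_type]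
  have : ∀ c, ∑ y : Core V E b, wt'' w (c, y) (σ (c, y)) =
      2 * ((∑ e, w e) + ∑ e ∈ sel σ c, w e) := by
    intro c
    rw [Fintype.sum_sum_type, hsum]
    simp only [hin]
    rw [Fintype.sum_prod_type]
    simp [← Finset.mul_sum, mul_add, add_comm]
  simp only [this, ← Finset.mul_sum]
  ring

theorem exists_PM {fst snd : E → V} (hloop : ∀ e, fst e ≠ snd e) {b : V → ℕ}
    (hb : ∀ v, 1 ≤ b v) (S : Finset E) (hS : isSBM fst snd b S) :
    ∃ σ : W V E b → W V E b, isPM fst snd σ ∧ ∀ c, sel σ c = S := by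
  classical
  have hf : ∀ v, ∃ f : E → Fin (b v),
      Set.InjOn f (S.filter (fun e => fst e = v ∨ snd e = v) : Finset E) := by
    intro v
    have h1 : Fintype.card (S.filter (fun e => fst e = v ∨ snd e = v)) ≤
        Fintype.card (Fin (b v)) := by
      rw [Fintype.card_coe, Fintype.card_fin]
      exact hS v
    obtain ⟨g⟩ := Function.Embedding.nonempty_of_card_le h1
    refine ⟨fun e => if he : e ∈ S.filter (fun e => fst e = v ∨ snd e = v)
      then g ⟨e, he⟩ else ⟨0, hb v⟩, ?_⟩
    intro e he e' he' hee
    have he1 : e ∈ S.filter (fun e => fst e = v ∨ snd e = v) := he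
    have he2 : e' ∈ S.filter (fun e => fst e = v ∨ snd e = v) := he'
    simp only [dif_pos he1, dif_pos he2] at hee
    simpa using g.injective hee
  choose f hf using hf
  let k : E × Bool → Σ v : V, Fin (b v) := fun p => ⟨en fst snd p, f _ p.1⟩
  have hinc : ∀ p : E × Bool, fst p.1 = en fst snd p ∨ snd p.1 = en fst snd p := by
    rintro ⟨e, s⟩
    cases s <;> simp [en]
  have hk : ∀ p q : E × Bool, p.1 ∈ S → q.1 ∈ S → k p = k q → p = q := by
    intro p q hp hq hpq
    have h1 : en fst snd p = en fst snd q := congrArg Sigma.fst hpq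
    have h2 : f (en fst snd p) p.1 = f (en fst snd p) q.1 := by
      simp only [k] at hpq
      rw [← h1] at hpq
      simpa using hpq
    have h3 : p.1 = q.1 := by
      apply hf (en fst snd p) _ _ h2
      · simp [hp, hinc p]
      · rw [h1]; simp [hq, hinc q]
    obtain ⟨e, s⟩ := p
    obtain ⟨e', s'⟩ := q
    simp only at h3
    subst h3
    have := hloop e
    have := (hloop e).symm
    cases s <;> cases s' <;> simp_all [en]
  let σ : W V E b → W V E b := fun x => match x with
    | (c, Sum.inr p) => if p.1 ∈ S then (c, Sum.inl (k p)) else (c, Sum.inr (p.1, !p.2))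
    | (c, Sum.inl a) => if hh : ∃ p : E × Bool, p.1 ∈ S ∧ k p = a then
        (c, Sum.inr hh.choose) else (!c, Sum.inl a)
  have s1 : ∀ c (p : E × Bool), p.1 ∈ S → σ (c, Sum.inr p) = (c, Sum.inl (k p)) :=
    fun c p hp => if_pos hp
  have s2 : ∀ c (p : E × Bool), p.1 ∉ S → σ (c, Sum.inr p) = (c, Sum.inr (p.1, !p.2)) :=
    fun c p hp => if_neg hp
  have s3 : ∀ c (p : E × Bool), p.1 ∈ S → σ (c, Sum.inl (k p)) = (c, Sum.inr p) := by
    intro c p hp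
    have hh : ∃ q : E × Bool, q.1 ∈ S ∧ k q = k p := ⟨p, hp, rfl⟩
    have : σ (c, Sum.inl (k p)) = (c, Sum.inr hh.choose) := dif_pos hh
    rw [this, hk _ _ hh.choose_spec.1 hp hh.choose_spec.2]
  have s4 : ∀ c (a : Σ v : V, Fin (b v)), (¬ ∃ p : E × Bool, p.1 ∈ S ∧ k p = a) →
      σ (c, Sum.inl a) = (!c, Sum.inl a) := fun c a ha => dif_neg ha
  clear_value σ
  have hadj : ∀ p : E × Bool, (p.2 = false ∧ fst p.1 = en fst snd p) ∨
      (p.2 = true ∧ snd p.1 = en fst snd p) := by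
    rintro ⟨e, s⟩
    cases s <;> simp [en]
  refine ⟨σ, ⟨?_, ?_, ?_⟩, ?_⟩
  · rintro ⟨c, a | p⟩
    · by_cases hh : ∃ p : E × Bool, p.1 ∈ S ∧ k p = a
      · obtain ⟨p, hp, rfl⟩ := hh
        rw [s3 c p hp, s1 c p hp]
      · rw [s4 c a hh, s4 _ a hh, Bool.not_not]
    · by_cases hp : p.1 ∈ S
      · rw [s1 c p hp, s3 c p hp]
      · rw [s2 c p hp, s2 c (p.1, !p.2) hp, Bool.not_not]
  · rintro ⟨c, a | p⟩
    · by_cases hh : ∃ p : E × Bool, p.1 ∈ S ∧ k p = a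
      · obtain ⟨p, hp, rfl⟩ := hh
        rw [s3 c p hp]; simp
      · rw [s4 c a hh]; simp
    · by_cases hp : p.1 ∈ S
      · rw [s1 c p hp]; simp
      · rw [s2 c p hp]
        obtain ⟨e, s⟩ := p
        simp
  · rintro ⟨c, a | p⟩
    · by_cases hh : ∃ p : E × Bool, p.1 ∈ S ∧ k p = a
      · obtain ⟨p, hp, rfl⟩ := hh
        rw [s3 c p hp]
        exact Or.inl ⟨rfl, hadj p⟩
      · rw [s4 c a hh]
        exact Or.inr ⟨by simp, a, rfl, rfl⟩
    · by_cases hp : p.1 ∈ S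
      · rw [s1 c p hp]
        exact Or.inl ⟨rfl, hadj p⟩
      · rw [s2 c p hp]
        exact Or.inl ⟨rfl, rfl, by simp⟩
  · intro c
    ext e
    simp only [sel, Finset.mem_filter, Finset.mem_univ, true_and]
    by_cases he : e ∈ S
    · simp [he, s1 c (e, false) he]
    · simp [he, s2 c (e, false) he]

end helpers

end S13

/-- For a finite loopless multigraph `G` (edges `E` with endpoints
`fst`, `snd`) with positive edge weights `w` and vertex capacities `1 ≤ b v ≤ deg v`,
the Schrijver gadget graph `G''` has a perfect matching, and the maximum weight of a
perfect matching of `G''` equals `2·(Σ_e w e + W)`, where `W` is the maximum weight of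
a simple `b`-matching of `G`. -/
theorem schrijver_reduction_simple_b_matching
    (V E : Type) [Fintype V] [DecidableEq V] [Fintype E] [DecidableEq E]
    (fst snd : E → V) (hloop : ∀ e, fst e ≠ snd e)
    (w : E → ℝ) (hw : ∀ e, 0 < w e)
    (b : V → ℕ)
    (hb : ∀ v, 1 ≤ b v ∧
      b v ≤ (Finset.univ.filter (fun e => fst e = v ∨ snd e = v)).card) :
    (∃ σ : S13.W V E b → S13.W V E b, S13.isPM fst snd σ) ∧
    ∃ Wmax : ℝ,
      (∃ S : Finset E, S13.isSBM fst snd b S ∧ (∑ e ∈ S, w e) = Wmax) ∧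
      (∀ S : Finset E, S13.isSBM fst snd b S → (∑ e ∈ S, w e) ≤ Wmax) ∧
      (∃ σ : S13.W V E b → S13.W V E b, S13.isPM fst snd σ ∧
        S13.pmwt w σ = 2 * ((∑ e : E, w e) + Wmax)) ∧
      (∀ σ : S13.W V E b → S13.W V E b, S13.isPM fst snd σ →
        S13.pmwt w σ ≤ 2 * ((∑ e : E, w e) + Wmax)) := by
  classical
  obtain ⟨S, hS, hmax⟩ := Finset.exists_max_image
    (Finset.univ.filter (fun S : Finset E => S13.isSBM fst snd b S)) (fun S => ∑ e ∈ S, w e)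
    ⟨∅, Finset.mem_filter.2 ⟨Finset.mem_univ _, fun v => by simp⟩⟩
  simp only [Finset.mem_filter, Finset.mem_univ, true_and] at hS hmax
  obtain ⟨σ, hσ, hsel⟩ := S13.exists_PM hloop (fun v => (hb v).1) S hS
  refine ⟨⟨σ, hσ⟩, ∑ e ∈ S, w e, ⟨S, hS, rfl⟩, hmax, ⟨σ, hσ, ?_⟩, ?_⟩
  · rw [S13.pmwt_eq w hσ]
    simp only [hsel, Fintype.sum_bool]
    ring
  · intro τ hτ
    rw [S13.pmwt_eq w hτ]
    have h1 := hmax _ (S13.sel_isSBM (fun v => (hb v).1) hτ true)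
    have h2 := hmax _ (S13.sel_isSBM (fun v => (hb v).1) hτ false)
    simp only [Fintype.sum_bool]
    linarith
end

section
/- Let L be a finite simple digraph with an RF-chain number r(v) ≥ 1 on each vertex, and let intf be a symmetric irreflexive interference relation on the arcs of L that holds only between arcs sharing no common vertex. For a link l = (u,v) set d(l) = min(r(u), r(v)). Let H be the expanded network with vertices (v,i) for 1 ≤ i ≤ r(v) and, for each link (u,v) of L, arcs ((u,j),(v,k)) for all j, k. Let C be the conflict graph whose vertices are the arcs of H, with two distinct arcs adjacent in C if and only if they share a vertex of H, or the links of L they expand interfere under intf. Then for every vertex e of C expanding a link l, every independent set of C contained in the closed neighborhood N_C[e] has cardinality at most 2 + Σ_{l' : intf(l', l)} d(l'). Consequently, for any ordering of the vertices of C, the inductive independence number of C is at most max_{l ∈ E(L)} Σ_{l' : intf(l', l)} d(l') + 2. -/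
namespace S14

/-- Vertices of the expanded network `H`: `r v` copies of each vertex `v` of `L`. -/
abbrev VH (V : Type) (r : V → ℕ) := Σ v : V, Fin (r v)

/-- Adjacency of the conflict graph `C` (full-duplex, MAX-SU-SM): two distinct arcs of
`H` conflict iff they share a vertex of `H` or the links they expand interfere. -/
def adjC {V : Type} {r : V → ℕ} (intf : V × V → V × V → Prop)
    (e f : VH V r × VH V r) : Prop :=
  e ≠ f ∧
  (e.1 = f.1 ∨ e.1 = f.2 ∨ e.2 = f.1 ∨ e.2 = f.2 ∨
    intf (e.1.1, e.2.1) (f.1.1, f.2.1))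

end S14

/-- For the conflict graph `C` of the full-duplex MAX-SU-SM expanded
network of the link network `L` under a pairwise interference relation `intf`
(symmetric, irreflexive, holding only between arcs of `L` sharing no vertex):
(i) for every vertex `e` of `C` expanding the link `l = (e.1.1, e.2.1)`, every
independent set of `C` contained in the closed neighborhood `N_C[e]` has cardinality
at most `2 + Σ_{l' interfering with l} d(l')` where `d(l') = min (r l'.1) (r l'.2)`;
(ii) consequently, for any ordering (injective ranking `ρ`) of the vertices of `C`,
the inductive independence number of `C` is at most
`max_{l ∈ E(L)} Σ_{l' interfering with l} d(l') + 2`. -/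
theorem inductive_independence_bound_fd_max
    (V : Type) [Fintype V] [DecidableEq V]
    (Adj : V → V → Prop) [DecidableRel Adj] (hirr : ∀ v, ¬ Adj v v)
    (r : V → ℕ) (hr : ∀ v, 1 ≤ r v)
    (intf : V × V → V × V → Prop) [DecidableRel intf]
    (hsym : ∀ l l', intf l l' → intf l' l)
    (hii : ∀ l, ¬ intf l l)
    (harcs : ∀ l l' : V × V, intf l l' →
      Adj l.1 l.2 ∧ Adj l'.1 l'.2 ∧
      l.1 ≠ l'.1 ∧ l.1 ≠ l'.2 ∧ l.2 ≠ l'.1 ∧ l.2 ≠ l'.2) :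
    (∀ e : S14.VH V r × S14.VH V r, Adj e.1.1 e.2.1 →
      ∀ S : Finset (S14.VH V r × S14.VH V r),
        (∀ x ∈ S, Adj x.1.1 x.2.1) →
        (∀ x ∈ S, x = e ∨ S14.adjC intf e x) →
        (∀ x ∈ S, ∀ y ∈ S, x ≠ y → ¬ S14.adjC intf x y) →
        S.card ≤ 2 + ∑ l' ∈ Finset.univ.filter
            (fun l' : V × V => intf l' (e.1.1, e.2.1)), min (r l'.1) (r l'.2)) ∧
    (∀ ρ : (S14.VH V r × S14.VH V r) → ℕ, Function.Injective ρ →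
      ∀ e : S14.VH V r × S14.VH V r, Adj e.1.1 e.2.1 →
      ∀ S : Finset (S14.VH V r × S14.VH V r),
        (∀ x ∈ S, Adj x.1.1 x.2.1) →
        (∀ x ∈ S, x = e ∨ (S14.adjC intf e x ∧ ρ x < ρ e)) →
        (∀ x ∈ S, ∀ y ∈ S, x ≠ y → ¬ S14.adjC intf x y) →
        S.card ≤ (Finset.univ.filter (fun l : V × V => Adj l.1 l.2)).sup
            (fun l => ∑ l' ∈ Finset.univ.filter (fun l' : V × V => intf l' l),
              min (r l'.1) (r l'.2)) + 2) := by
  have key : ∀ e : S14.VH V r × S14.VH V r, 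
      ∀ S : Finset (S14.VH V r × S14.VH V r),
        (∀ x ∈ S, x = e ∨ S14.adjC intf e x) →
        (∀ x ∈ S, ∀ y ∈ S, x ≠ y → ¬ S14.adjC intf x y) →
        S.card ≤ 2 + ∑ l' ∈ Finset.univ.filter
            (fun l' : V × V => intf l' (e.1.1, e.2.1)), min (r l'.1) (r l'.2) := by
    intro e S hN hI
    classical
    have hI' : ∀ x ∈ S, ∀ y ∈ S,
        (x.1 = y.1 ∨ x.1 = y.2 ∨ x.2 = y.1 ∨ x.2 = y.2) → x = y := by
      intro x hx y hy h
      by_contra hne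
      exact hI x hx y hy hne ⟨hne, by tauto⟩
    let A1 := S.filter (fun x => e.1 = x.1 ∨ e.1 = x.2)
    let A2 := S.filter (fun x => e.2 = x.1 ∨ e.2 = x.2)
    let B := S.filter (fun x => intf (x.1.1, x.2.1) (e.1.1, e.2.1))
    have h1 : A1.card ≤ 1 := by
      rw [Finset.card_le_one]
      intro x hx y hy
      simp only [A1, Finset.mem_filter] at hx hy
      apply hI' x hx.1 y hy.1
      grind
    have h2 : A2.card ≤ 1 := by
      rw [Finset.card_le_one]
      intro x hx y hy
      simp only [A2, Finset.mem_filter] at hx hy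
      apply hI' x hx.1 y hy.1
      grind
    have hB : B.card ≤ ∑ l' ∈ Finset.univ.filter
            (fun l' : V × V => intf l' (e.1.1, e.2.1)), min (r l'.1) (r l'.2) := by
      rw [Finset.card_eq_sum_card_fiberwise (f := fun x => (x.1.1, x.2.1))
        (t := Finset.univ.filter (fun l' : V × V => intf l' (e.1.1, e.2.1)))]
      · apply Finset.sum_le_sum
        intro l _
        apply le_min
        · calc _ ≤ (Finset.univ.image (fun i : Fin (r l.1) =>
                (⟨l.1, i⟩ : S14.VH V r))).card := by
                apply Finset.card_le_card_of_injOn (fun x => x.1)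
                · rintro ⟨⟨a, i⟩, ⟨b, j⟩⟩ hx
                  simp only [Finset.coe_filter, Set.mem_ofPred_eq] at hx
                  obtain ⟨_, rfl⟩ := hx
                  simp
                · intro x hx y hy h
                  simp only [B, Finset.coe_filter, Finset.mem_filter, Set.mem_ofPred_eq] at hx hy
                  exact hI' x hx.1.1 y hy.1.1 (Or.inl h)
            _ ≤ _ := Finset.card_image_le
            _ = _ := by simp
        · calc _ ≤ (Finset.univ.image (fun i : Fin (r l.2) =>
                (⟨l.2, i⟩ : S14.VH V r))).card := by
                apply Finset.card_le_card_of_injOn (fun x => x.2)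
                · rintro ⟨⟨a, i⟩, ⟨b, j⟩⟩ hx
                  simp only [Finset.coe_filter, Set.mem_ofPred_eq] at hx
                  obtain ⟨_, rfl⟩ := hx
                  simp
                · intro x hx y hy h
                  simp only [B, Finset.coe_filter, Finset.mem_filter, Set.mem_ofPred_eq] at hx hy
                  exact hI' x hx.1.1 y hy.1.1 (Or.inr (Or.inr (Or.inr h)))
            _ ≤ _ := Finset.card_image_le
            _ = _ := by simp
      · intro x hx
        simpa [B] using (Finset.mem_filter.mp hx).2
    have hS : S ⊆ (A1 ∪ A2) ∪ B := by
      intro x hx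
      simp only [A1, A2, B, Finset.mem_union, Finset.mem_filter]
      rcases hN x hx with rfl | ⟨_, h⟩
      · simp [hx]
      · have := hsym (e.1.1, e.2.1) (x.1.1, x.2.1)
        tauto
    have c1 := Finset.card_le_card hS
    have c2 := Finset.card_union_le (A1 ∪ A2) B
    have c3 := Finset.card_union_le A1 A2
    omega
  refine ⟨fun e _ S _ hN hI => key e S hN hI, fun ρ _ e he S _ hN hI => ?_⟩
  have h := key e S (fun x hx => (hN x hx).imp id And.left) hI
  have h' := Finset.le_sup (s := Finset.univ.filter (fun l : V × V => Adj l.1 l.2))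
    (f := fun l => ∑ l' ∈ Finset.univ.filter (fun l' : V × V => intf l' l),
      min (r l'.1) (r l'.2)) (b := (e.1.1, e.2.1)) (by simpa using he)
  omega
end

section
/- Let L be a finite simple digraph with an RF-chain number r(v) ≥ 1 on each vertex, and let intf be a symmetric irreflexive interference relation on the arcs of L that holds only between arcs sharing no common vertex. For a link l = (u,v) set d(l) = min(r(u), r(v)). Let H be the sparse half-duplex expanded network with vertices (v,i) for 1 ≤ i ≤ r(v) and, for each link (u,v) of L, arcs ((u,j),(v,k)) for all j, k if r(u) ≠ r(v), and only the diagonal arcs ((u,j),(v,j)) if r(u) = r(v). Let C be the conflict graph whose vertices are the arcs of H, with two distinct arcs adjacent in C if and only if they share a vertex of H, or there is a vertex w of L such that one arc enters a copy of w and the other leaves a copy of w, or the links of L they expand interfere under intf. Then for every vertex e of C expanding a link l = (u,v), every independent set of C contained in the closed neighborhood N_C[e] has cardinality at most r(u) + r(v) + Σ_{l' : intf(l', l)} d(l'). -/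
namespace S15

/-- Vertices of the sparse half-duplex expanded network `H`: `r v` copies of each
vertex `v` of `L`. -/
abbrev VH (V : Type) (r : V → ℕ) := Σ v : V, Fin (r v)

/-- Arcs of the sparse half-duplex expanded network: for a link `(u,v)` of `L`, all
arcs `((u,j),(v,k))` if `r u ≠ r v`, and only the diagonal arcs (`j = k`) if
`r u = r v`. -/
def arcH {V : Type} (Adj : V → V → Prop) {r : V → ℕ} (e : VH V r × VH V r) : Prop :=
  Adj e.1.1 e.2.1 ∧ (r e.1.1 = r e.2.1 → e.1.2.val = e.2.2.val)

/-- Adjacency of the conflict graph `C` (half-duplex): two distinct arcs of `H`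
conflict iff they share a vertex of `H`, or there is a vertex `w` of `L` such that one
arc enters a copy of `w` and the other leaves a copy of `w`, or the links they expand
interfere. -/
def adjC {V : Type} {r : V → ℕ} (intf : V × V → V × V → Prop)
    (e f : VH V r × VH V r) : Prop :=
  e ≠ f ∧
  (e.1 = f.1 ∨ e.1 = f.2 ∨ e.2 = f.1 ∨ e.2 = f.2 ∨
    e.2.1 = f.1.1 ∨ f.2.1 = e.1.1 ∨
    intf (e.1.1, e.2.1) (f.1.1, f.2.1))

end S15

theorem S15.touch_card {V : Type} [DecidableEq V] {r : V → ℕ}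
    (T : Finset (S15.VH V r × S15.VH V r)) (intf : V × V → V × V → Prop)
    (hT : ∀ x ∈ T, ∀ y ∈ T, x ≠ y → ¬ S15.adjC intf x y) (w : V)
    (hw : ∀ x ∈ T, x.1.1 = w ∨ x.2.1 = w) : T.card ≤ r w := by
  classical
  have h1 : T.card ≤ ((Finset.univ : Finset (Fin (r w))).image
      (fun i => (⟨w, i⟩ : S15.VH V r))).card := by
    apply Finset.card_le_card_of_injOn (fun x => if x.1.1 = w then x.1 else x.2)
    · intro x hx
      have key : ∀ p : S15.VH V r, p.1 = w → p ∈ ((Finset.univ : Finset (Fin (r w))).image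
          (fun i => (⟨w, i⟩ : S15.VH V r))) := by
        rintro ⟨a, i⟩ h
        dsimp at h
        subst h
        simp
      apply key
      dsimp only
      split_ifs with h
      · exact h
      · exact (hw x hx).resolve_left h
    · intro x hx y hy hxy
      by_contra hne
      apply hT x hx y hy hne
      refine ⟨hne, ?_⟩
      dsimp only at hxy
      split_ifs at hxy <;> simp [hxy]
  refine h1.trans (Finset.card_image_le.trans ?_)
  simp

/-- For the conflict graph `C` of the sparse half-duplex expanded
network of the link network `L` under a pairwise interference relation `intf`
(symmetric, irreflexive, holding only between arcs of `L` sharing no vertex): for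
every vertex `e` of `C` expanding the link `l = (u,v)`, every independent set of `C`
contained in the closed neighborhood `N_C[e]` has cardinality at most
`r u + r v + Σ_{l' interfering with l} d(l')` where `d(l') = min (r l'.1) (r l'.2)`. -/
theorem local_independence_bound_hd
    (V : Type) [Fintype V] [DecidableEq V]
    (Adj : V → V → Prop) [DecidableRel Adj] (hirr : ∀ v, ¬ Adj v v)
    (r : V → ℕ) (hr : ∀ v, 1 ≤ r v)
    (intf : V × V → V × V → Prop) [DecidableRel intf]
    (hsym : ∀ l l', intf l l' → intf l' l)
    (hii : ∀ l, ¬ intf l l)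
    (harcs : ∀ l l' : V × V, intf l l' →
      Adj l.1 l.2 ∧ Adj l'.1 l'.2 ∧
      l.1 ≠ l'.1 ∧ l.1 ≠ l'.2 ∧ l.2 ≠ l'.1 ∧ l.2 ≠ l'.2) :
    ∀ e : S15.VH V r × S15.VH V r, S15.arcH Adj e →
      ∀ S : Finset (S15.VH V r × S15.VH V r),
        (∀ x ∈ S, S15.arcH Adj x) →
        (∀ x ∈ S, x = e ∨ S15.adjC intf e x) →
        (∀ x ∈ S, ∀ y ∈ S, x ≠ y → ¬ S15.adjC intf x y) →
        S.card ≤ r e.1.1 + r e.2.1 + ∑ l' ∈ Finset.univ.filter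
            (fun l' : V × V => intf l' (e.1.1, e.2.1)), min (r l'.1) (r l'.2) := by
  classical
  intro e he S hS hN hI
  set A := S.filter (fun x => x.1.1 = e.1.1 ∨ x.2.1 = e.1.1) with hA
  set B := S.filter (fun x => x.1.1 = e.2.1 ∨ x.2.1 = e.2.1) with hB
  set F := Finset.univ.filter (fun l' : V × V => intf l' (e.1.1, e.2.1)) with hF
  set D := F.biUnion (fun l => S.filter (fun x => x.1.1 = l.1 ∧ x.2.1 = l.2)) with hD
  have hsub : S ⊆ (A ∪ B) ∪ D := by
    intro x hx
    simp only [hA, hB, hD, hF, Finset.mem_union, Finset.mem_filter, Finset.mem_biUnion,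
      Finset.mem_univ, true_and, hx]
    rcases hN x hx with h | ⟨_, h | h | h | h | h | h | h⟩
    · simp [h]
    · simp [h]
    · simp [h]
    · simp [h]
    · simp [h]
    · simp [h]
    · simp [h]
    · exact Or.inr ⟨(x.1.1, x.2.1), hsym _ _ h, rfl, rfl⟩
  have hsubI : ∀ T ⊆ S, ∀ x ∈ T, ∀ y ∈ T, x ≠ y → ¬ S15.adjC intf x y :=
    fun T hT x hx y hy => hI x (hT hx) y (hT hy)
  have cA : A.card ≤ r e.1.1 := S15.touch_card A intf (hsubI A (Finset.filter_subset _ _)) _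
    (fun x hx => (Finset.mem_filter.1 hx).2)
  have cB : B.card ≤ r e.2.1 := S15.touch_card B intf (hsubI B (Finset.filter_subset _ _)) _
    (fun x hx => (Finset.mem_filter.1 hx).2)
  have cD : D.card ≤ ∑ l' ∈ F, min (r l'.1) (r l'.2) := by
    refine Finset.card_biUnion_le.trans (Finset.sum_le_sum fun l _ => le_min ?_ ?_)
    · exact S15.touch_card _ intf (hsubI _ (Finset.filter_subset _ _)) _
        (fun x hx => Or.inl (Finset.mem_filter.1 hx).2.1)
    · exact S15.touch_card _ intf (hsubI _ (Finset.filter_subset _ _)) _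
        (fun x hx => Or.inr (Finset.mem_filter.1 hx).2.2)
  have h1 := Finset.card_le_card hsub
  have h2 := Finset.card_union_le (A ∪ B) D
  have h3 := Finset.card_union_le A B
  omega
end
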